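/- arXiv:2108.02857 — 2 statements merged into one kernel-verified Lean document; each statement's English description precedes it below -/
import Mathlib

section
/- For every θ > 0, every integer n ≥ 1 and every mesh 0 < Δₙ ≤ 1, the discretization error δ(n) := A(n) − F_{Tₙ} satisfies E[δ(n)²] ≤ C_θ · n·Δₙ², where C_θ := 4 · max( 8/(9θ), (√2/3)·θ^{−1/2}, 1/4 ). In particular, if Δₙ → 0 and n·Δₙ² → 0 as n → ∞, then E[δ(n)²] → 0. -/
open MeasureTheory ProbabilityTheory Real Filter Finset
open scoped Topology ENNReal NNReal

noncomputable section

/-- Kolmogorov distance between two Borel measures on `ℝ`. -/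
def dKol (μ ν : Measure ℝ) : ℝ :=
  ⨆ z : ℝ, |(μ (Set.Iic z)).toReal - (ν (Set.Iic z)).toReal|

/-- `X 0, X 1 : ℝ → Ω → ℝ` is a pair of independent centered Gaussian processes,
started at `0`, with almost surely continuous paths on `[0,∞)` and the
Ornstein–Uhlenbeck covariance `E[Xᵢ(s)Xᵢ(t)] = (e^{−θ|t−s|} − e^{−θ(t+s)})/(2θ)`. -/
structure IsOUPair {Ω : Type} [MeasureSpace Ω] (θ : ℝ) (X : Fin 2 → ℝ → Ω → ℝ) : Prop where
  meas : ∀ i t, Measurable (X i t)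
  gaussian : ∀ (i : Fin 2) (n : ℕ) (t : Fin n → ℝ) (c : Fin n → ℝ), (∀ j, 0 ≤ t j) →
      ∃ v : NNReal, Measure.map (fun ω => ∑ j, c j * X i (t j) ω) ℙ = gaussianReal 0 v
  indep : IndepFun (fun ω t => X 0 t ω) (fun ω t => X 1 t ω) ℙ
  cont : ∀ᵐ ω ∂(ℙ : Measure Ω), ∀ i, ContinuousOn (fun t => X i t ω) (Set.Ici 0)
  init : ∀ i ω, X i 0 ω = 0
  cov : ∀ (i : Fin 2) (s t : ℝ), 0 ≤ s → 0 ≤ t →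
      ∫ ω, X i s ω * X i t ω ∂ℙ
        = (Real.exp (-θ * |t - s|) - Real.exp (-θ * (t + s))) / (2 * θ)

variable {Ω : Type} [MeasureSpace Ω]

/-- `F_T := T^{-1/2} ∫₀^T X₁(u) X₂(u) du`. -/
def ouF (X : Fin 2 → ℝ → Ω → ℝ) (T : ℝ) (ω : Ω) : ℝ :=
  (1 / Real.sqrt T) * ∫ u in (0:ℝ)..T, X 0 u ω * X 1 u ω

/-- `X̄ᵢ(T) := T^{-1} ∫₀^T Xᵢ(u) du`. -/
def ouXbar (X : Fin 2 → ℝ → Ω → ℝ) (i : Fin 2) (T : ℝ) (ω : Ω) : ℝ :=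
  (1 / T) * ∫ u in (0:ℝ)..T, X i u ω

/-- `Y_{ij}(T) := ∫₀^T Xᵢ(u)Xⱼ(u) du − T·X̄ᵢ(T)·X̄ⱼ(T)`. -/
def ouY (X : Fin 2 → ℝ → Ω → ℝ) (i j : Fin 2) (T : ℝ) (ω : Ω) : ℝ :=
  (∫ u in (0:ℝ)..T, X i u ω * X j u ω) - T * ouXbar X i T ω * ouXbar X j T ω

/-- Yule's nonsense correlation `ρ(T)`. -/
def ouRho (X : Fin 2 → ℝ → Ω → ℝ) (T : ℝ) (ω : Ω) : ℝ :=
  ouY X 0 1 T ω / Real.sqrt (ouY X 0 0 T ω * ouY X 1 1 T ω)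

/-- `A(n) := (√Tₙ/n) Σ_{k<n} X₁(kΔ)X₂(kΔ)` with `Tₙ = nΔ`. -/
def ouA (X : Fin 2 → ℝ → Ω → ℝ) (n : ℕ) (Δ : ℝ) (ω : Ω) : ℝ :=
  (Real.sqrt (n * Δ) / n) * ∑ k ∈ Finset.range n, X 0 (k * Δ) ω * X 1 (k * Δ) ω

/-- `X̃ᵢ(n) := n^{-1} Σ_{k<n} Xᵢ(kΔ)`. -/
def ouXtilde (X : Fin 2 → ℝ → Ω → ℝ) (i : Fin 2) (n : ℕ) (Δ : ℝ) (ω : Ω) : ℝ :=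
  (1 / n) * ∑ k ∈ Finset.range n, X i (k * Δ) ω

/-- `Ỹ_{ij}(n) := Δ Σ_{k<n} Xᵢ(kΔ)Xⱼ(kΔ) − Tₙ·X̃ᵢ(n)·X̃ⱼ(n)` with `Tₙ = nΔ`. -/
def ouYtilde (X : Fin 2 → ℝ → Ω → ℝ) (i j : Fin 2) (n : ℕ) (Δ : ℝ) (ω : Ω) : ℝ :=
  Δ * ∑ k ∈ Finset.range n, X i (k * Δ) ω * X j (k * Δ) ω
    - (n * Δ) * ouXtilde X i n Δ ω * ouXtilde X j n Δ ω

/-- Yule's discrete nonsense correlation `ρ̃(n)`. -/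
def ouRhoTilde (X : Fin 2 → ℝ → Ω → ℝ) (n : ℕ) (Δ : ℝ) (ω : Ω) : ℝ :=
  ouYtilde X 0 1 n Δ ω / Real.sqrt (ouYtilde X 0 0 n Δ ω * ouYtilde X 1 1 n Δ ω)

lemma ou_memLp [IsProbabilityMeasure (ℙ : Measure Ω)] {θ : ℝ} {X : Fin 2 → ℝ → Ω → ℝ}
    (hX : IsOUPair θ X) (i : Fin 2) {t : ℝ} (ht : 0 ≤ t) : MemLp (X i t) 2 ℙ := by
  obtain ⟨v, hv⟩ := hX.gaussian i 1 (fun _ => t) (fun _ => 1) (fun _ => ht)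
  have h : (fun ω => ∑ _j : Fin 1, (1:ℝ) * X i t ω) = X i t := by
    funext ω; simp
  rw [h] at hv
  have h1 : MemLp id 2 (Measure.map (X i t) ℙ) := by
    rw [hv]; exact memLp_id_gaussianReal 2
  exact h1.comp_of_map (hX.meas i t).aemeasurable

lemma ou_prod [IsProbabilityMeasure (ℙ : Measure Ω)] {θ : ℝ} {X : Fin 2 → ℝ → Ω → ℝ}
    (hX : IsOUPair θ X) {s t : ℝ} (hs : 0 ≤ s) (ht : 0 ≤ t) :
    Integrable (fun ω => (X 0 s ω * X 0 t ω) * (X 1 s ω * X 1 t ω)) ℙ ∧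
    ∫ ω, (X 0 s ω * X 0 t ω) * (X 1 s ω * X 1 t ω) ∂ℙ
      = ((Real.exp (-θ * |t - s|) - Real.exp (-θ * (t + s))) / (2 * θ)) ^ 2 := by
  have hm : Measurable (fun x : ℝ → ℝ => x s * x t) :=
    (measurable_pi_apply s).mul (measurable_pi_apply t)
  have hi : IndepFun (fun ω => X 0 s ω * X 0 t ω) (fun ω => X 1 s ω * X 1 t ω) ℙ :=
    hX.indep.comp hm hm
  have hI : ∀ i, Integrable (fun ω => X i s ω * X i t ω) ℙ := fun i =>
    (ou_memLp hX i hs).integrable_mul (ou_memLp hX i ht)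
  refine ⟨hi.integrable_mul (hI 0) (hI 1), ?_⟩
  have := hi.integral_fun_mul_eq_mul_integral (hI 0).1 (hI 1).1
  rw [this, hX.cov 0 s t hs ht, hX.cov 1 s t hs ht, sq]

lemma ou_alg {θ : ℝ} (hθ : 0 < θ) {s t : ℝ} (hs : 0 ≤ s) (hst : s ≤ t) :
    ((Real.exp (-θ * |s - s|) - Real.exp (-θ * (s + s))) / (2 * θ)) ^ 2
    - 2 * ((Real.exp (-θ * |t - s|) - Real.exp (-θ * (t + s))) / (2 * θ)) ^ 2
    + ((Real.exp (-θ * |t - t|) - Real.exp (-θ * (t + t))) / (2 * θ)) ^ 2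
    ≤ (t - s) / θ := by
  set e := Real.exp (-θ * (t - s)) with he
  set f := Real.exp (-θ * s) with hf
  have h1 : Real.exp (-θ * (s + s)) = f ^ 2 := by
    rw [hf, ← Real.exp_nat_mul]; congr 1; push_cast; ring
  have h2 : Real.exp (-θ * (t + s)) = e * f ^ 2 := by
    rw [hf, he, ← Real.exp_nat_mul, ← Real.exp_add]; congr 1; push_cast; ring
  have h3 : Real.exp (-θ * (t + t)) = e ^ 2 * f ^ 2 := by
    rw [hf, he, ← Real.exp_nat_mul, ← Real.exp_nat_mul, ← Real.exp_add]
    congr 1; push_cast; ring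
  have h4 : 1 - e ^ 2 ≤ 2 * θ * (t - s) := by
    have : e ^ 2 = Real.exp (-(2 * θ * (t - s))) := by
      rw [he, ← Real.exp_nat_mul]; congr 1; push_cast; ring
    have h5 := Real.add_one_le_exp (-(2 * θ * (t - s)))
    rw [this]; linarith
  have he1 : e ≤ 1 := by
    rw [he]; apply Real.exp_le_one_iff.2; nlinarith
  have he0 : 0 < e := Real.exp_pos _
  have hf1 : f ≤ 1 := by
    rw [hf]; apply Real.exp_le_one_iff.2; nlinarith
  have hf0 : 0 < f := Real.exp_pos _
  rw [h1, h2, h3, abs_of_nonneg (sub_nonneg.2 hst), ← he]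
  simp only [sub_self, abs_zero, mul_zero, Real.exp_zero]
  have hq0 : 0 ≤ 1 - e ^ 2 := by nlinarith
  have hp1 : f ^ 2 ≤ 1 := by nlinarith
  have hp0 : 0 ≤ f ^ 2 := sq_nonneg f
  have key : (1 - e ^ 2) * (2 - 2 * f ^ 2 + (f ^ 2) ^ 2 * (1 - e ^ 2)) ≤ 4 * θ * (t - s) := by
    have : 2 - 2 * f ^ 2 + (f ^ 2) ^ 2 * (1 - e ^ 2) ≤ 2 := by
      have : (f ^ 2) ^ 2 * (1 - e ^ 2) ≤ f ^ 2 := by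
        have a1 : (f ^ 2) ^ 2 ≤ f ^ 2 := by nlinarith
        have a2 : (f ^ 2) ^ 2 * (1 - e ^ 2) ≤ (f ^ 2) ^ 2 := by
          nlinarith [sq_nonneg (f ^ 2), sq_nonneg (f ^ 2 * e)]
        linarith
      linarith
    nlinarith
  have e1 : ((1 - f ^ 2) / (2 * θ)) ^ 2 - 2 * ((e - e * f ^ 2) / (2 * θ)) ^ 2
      + ((1 - e ^ 2 * f ^ 2) / (2 * θ)) ^ 2
      = ((1 - e ^ 2) * (2 - 2 * f ^ 2 + (f ^ 2) ^ 2 * (1 - e ^ 2))) / (4 * θ ^ 2) := by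
    field_simp; ring
  have e2 : (t - s) / θ = (4 * θ * (t - s)) / (4 * θ ^ 2) := by
    field_simp
  rw [e1, e2]
  gcongr

lemma ou_incr [IsProbabilityMeasure (ℙ : Measure Ω)] {θ : ℝ} (hθ : 0 < θ)
    {X : Fin 2 → ℝ → Ω → ℝ}
    (hX : IsOUPair θ X) {s t : ℝ} (hs : 0 ≤ s) (hst : s ≤ t) :
    Integrable (fun ω => (X 0 s ω * X 1 s ω - X 0 t ω * X 1 t ω) ^ 2) ℙ ∧
    ∫ ω, (X 0 s ω * X 1 s ω - X 0 t ω * X 1 t ω) ^ 2 ∂ℙ ≤ (t - s) / θ := by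
  have ht := hs.trans hst
  obtain ⟨i1, v1⟩ := ou_prod hX hs hs
  obtain ⟨i2, v2⟩ := ou_prod hX hs ht
  obtain ⟨i3, v3⟩ := ou_prod hX ht ht
  have heq : (fun ω => (X 0 s ω * X 1 s ω - X 0 t ω * X 1 t ω) ^ 2) = fun ω =>
      ((X 0 s ω * X 0 s ω) * (X 1 s ω * X 1 s ω)
       - 2 * ((X 0 s ω * X 0 t ω) * (X 1 s ω * X 1 t ω)))
       + (X 0 t ω * X 0 t ω) * (X 1 t ω * X 1 t ω) := by
    funext ω; ring
  rw [heq]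
  refine ⟨(i1.sub (i2.const_mul 2)).add i3, ?_⟩
  rw [integral_add (by exact i1.sub (i2.const_mul 2)) i3, integral_sub i1 (i2.const_mul 2),
    integral_const_mul, v1, v2, v3]
  exact ou_alg hθ hs hst

lemma cs_interval {f : ℝ → ℝ} (hf : Continuous f) {a b : ℝ} (hab : a < b) :
    (∫ u in a..b, f u) ^ 2 ≤ (b - a) * ∫ u in a..b, f u ^ 2 := by
  set m := (∫ u in a..b, f u) / (b - a) with hm
  have hba : 0 < b - a := sub_pos.2 hab
  have h0 : 0 ≤ ∫ u in a..b, (f u - m) ^ 2 :=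
    intervalIntegral.integral_nonneg hab.le (fun u _ => sq_nonneg _)
  have h1 : ∫ u in a..b, (f u - m) ^ 2
      = (∫ u in a..b, f u ^ 2) - 2 * m * (∫ u in a..b, f u) + (b - a) * m ^ 2 := by
    have : (fun u => (f u - m) ^ 2) = fun u => (f u ^ 2 - (2 * m) * f u) + m ^ 2 := by
      funext u; ring
    rw [this, intervalIntegral.integral_add, intervalIntegral.integral_sub,
      intervalIntegral.integral_const_mul, intervalIntegral.integral_const, smul_eq_mul]
    all_goals exact Continuous.intervalIntegrable (by fun_prop) _ _
  have h2 : (∫ u in a..b, f u) = m * (b - a) := by rw [hm]; field_simp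
  rw [h1, h2] at h0
  rw [h2]
  nlinarith

lemma cell_bound [IsProbabilityMeasure (ℙ : Measure Ω)] {θ : ℝ} (hθ : 0 < θ)
    {Z : ℝ → Ω → ℝ} (hc : ∀ ω, Continuous fun t => Z t ω) (hm : ∀ t, Measurable (Z t))
    {s h : ℝ} (hh : 0 < h)
    (hb : ∀ t, s ≤ t → Integrable (fun ω => (Z s ω - Z t ω) ^ 2) ℙ ∧
      ∫ ω, (Z s ω - Z t ω) ^ 2 ∂ℙ ≤ (t - s) / θ) :
    Integrable (fun ω => (∫ u in s..(s+h), (Z s ω - Z u ω)) ^ 2) ℙ ∧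
    ∫ ω, (∫ u in s..(s+h), (Z s ω - Z u ω)) ^ 2 ∂ℙ ≤ h ^ 3 / θ := by
  have hsh : s ≤ s + h := by linarith
  let D : ℝ → Ω → ℝ := fun u ω => Z s ω - Z u ω
  have hDm : Measurable (Function.uncurry D) :=
    measurable_uncurry_of_continuous_of_measurable
      (fun ω => continuous_const.sub (hc ω)) (fun u => (hm s).sub (hm u))
  have hD2m : Measurable (Function.uncurry fun u ω => (D u ω) ^ 2) := hDm.pow_const 2
  have hout : Integrable (fun u => ∫ ω, (D u ω) ^ 2 ∂ℙ) (volume.restrict (Set.uIoc s (s+h))) := by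
    rw [Set.uIoc_of_le hsh]
    refine Measure.integrableOn_of_bounded (M := h / θ) (by simp) ?_ ?_
    · exact hD2m.stronglyMeasurable.integral_prod_right.aestronglyMeasurable
    · filter_upwards [ae_restrict_mem measurableSet_Ioc] with u hu
      rw [Real.norm_eq_abs, abs_of_nonneg (integral_nonneg fun ω => sq_nonneg _)]
      refine (hb u hu.1.le).2.trans ?_
      have := hu.2
      gcongr; linarith
  have hint : Integrable (Function.uncurry fun u ω => (D u ω) ^ 2)
      ((volume.restrict (Set.uIoc s (s+h))).prod ℙ) := by
    rw [integrable_prod_iff hD2m.aestronglyMeasurable]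
    constructor
    · rw [Set.uIoc_of_le hsh]
      filter_upwards [ae_restrict_mem measurableSet_Ioc] with u hu
      exact (hb u hu.1.le).1
    · refine hout.congr (Eventually.of_forall fun u => ?_)
      simp [Function.uncurry]
  have hswap := intervalIntegral_integral_swap (f := fun u ω => (D u ω) ^ 2) hint
  have hG : Integrable (fun ω => h * ∫ u in s..(s+h), (D u ω) ^ 2) ℙ := by
    have := hint.integral_prod_right
    simp only [intervalIntegral.integral_of_le hsh]
    rw [Set.uIoc_of_le hsh] at this
    exact this.const_mul h
  have hle : ∀ ω, (∫ u in s..(s+h), D u ω) ^ 2 ≤ h * ∫ u in s..(s+h), (D u ω) ^ 2 := by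
    intro ω
    have := cs_interval (f := fun u => D u ω) (continuous_const.sub (hc ω))
      (a := s) (b := s + h) (by linarith)
    simpa using this
  have hmeas : Measurable (fun ω => (∫ u in s..(s+h), D u ω) ^ 2) := by
    simp only [intervalIntegral.integral_of_le hsh]
    exact hDm.stronglyMeasurable.integral_prod_left.measurable.pow_const 2
  refine ⟨hG.mono' hmeas.aestronglyMeasurable (Eventually.of_forall fun ω => ?_), ?_⟩
  · rw [Real.norm_eq_abs, abs_of_nonneg (sq_nonneg _)]; exact hle ω
  · calc ∫ ω, (∫ u in s..(s+h), D u ω) ^ 2 ∂ℙ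
        ≤ ∫ ω, h * ∫ u in s..(s+h), (D u ω) ^ 2 ∂ℙ :=
          integral_mono_of_nonneg (Eventually.of_forall fun ω => sq_nonneg _) hG
            (Eventually.of_forall hle)
      _ = h * ∫ u in s..(s+h), ∫ ω, (D u ω) ^ 2 ∂ℙ := by
          rw [integral_const_mul, hswap]
      _ ≤ h * ∫ u in s..(s+h), h / θ := by
          gcongr
          refine intervalIntegral.integral_mono_on hsh ?_ (by simp) ?_
          · rw [intervalIntegrable_iff]; exact hout
          · intro u hu
            refine (hb u hu.1).2.trans ?_
            have := hu.2
            gcongr; linarith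
      _ = h ^ 3 / θ := by
          rw [intervalIntegral.integral_const, smul_eq_mul]; ring

lemma ou_regular [IsProbabilityMeasure (ℙ : Measure Ω)] {θ : ℝ} {X : Fin 2 → ℝ → Ω → ℝ}
    (hX : IsOUPair θ X) : ∃ Z : ℝ → Ω → ℝ, (∀ ω, Continuous fun t => Z t ω) ∧
      (∀ t, Measurable (Z t)) ∧
      ∀ᵐ ω ∂(ℙ : Measure Ω), ∀ t, 0 ≤ t → Z t ω = X 0 t ω * X 1 t ω := by
  classical
  obtain ⟨N, hN, hNm, hN0⟩ := exists_measurable_superset_of_null (ae_iff.1 hX.cont)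
  refine ⟨fun t ω => if ω ∈ N then 0 else X 0 |t| ω * X 1 |t| ω, ?_, ?_, ?_⟩
  · intro ω
    by_cases h : ω ∈ N
    · simp only [h, if_true]; exact continuous_const
    · simp only [h, if_false]
      have hco : ∀ i, ContinuousOn (fun t => X i t ω) (Set.Ici 0) := by
        by_contra hcon
        exact h (hN hcon)
      exact ((hco 0).comp_continuous continuous_abs fun t => abs_nonneg t).mul
        ((hco 1).comp_continuous continuous_abs fun t => abs_nonneg t)
  · intro t
    exact Measurable.ite hNm measurable_const ((hX.meas 0 _).mul (hX.meas 1 _))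
  · filter_upwards [measure_eq_zero_iff_ae_notMem.1 hN0] with ω hω t ht
    simp [hω, abs_of_nonneg ht]

theorem ou_main [IsProbabilityMeasure (ℙ : Measure Ω)] {θ : ℝ} (hθ : 0 < θ)
    {X : Fin 2 → ℝ → Ω → ℝ} (hX : IsOUPair θ X) {n : ℕ} (hn : 1 ≤ n) {Δ : ℝ} (hΔ : 0 < Δ) :
    ∫ ω, (ouA X n Δ ω - ouF X (n * Δ) ω) ^ 2 ∂ℙ ≤ 1 / θ * (n * Δ ^ 2) := by
  obtain ⟨Z, hc, hm, hZ⟩ := ou_regular hX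
  have hn0 : (0:ℝ) < n := by exact_mod_cast hn
  have hb : ∀ k : ℕ, Integrable
      (fun ω => (∫ u in ((k:ℝ) * Δ)..(k * Δ + Δ), (Z (k * Δ) ω - Z u ω)) ^ 2) ℙ ∧
      ∫ ω, (∫ u in ((k:ℝ) * Δ)..(k * Δ + Δ), (Z (k * Δ) ω - Z u ω)) ^ 2 ∂ℙ ≤ Δ ^ 3 / θ := by
    intro k
    have hk : 0 ≤ (k:ℝ) * Δ := by positivity
    refine cell_bound hθ hc hm hΔ fun t ht => ?_
    obtain ⟨h1, h2⟩ := ou_incr hθ hX hk ht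
    have hae : (fun ω => (X 0 (k * Δ) ω * X 1 (k * Δ) ω - X 0 t ω * X 1 t ω) ^ 2)
        =ᵐ[ℙ] fun ω => (Z (k * Δ) ω - Z t ω) ^ 2 := by
      filter_upwards [hZ] with ω hω
      rw [hω _ hk, hω t (hk.trans ht)]
    exact ⟨h1.congr hae, by rw [← integral_congr_ae hae]; exact h2⟩
  have hpt : ∀ᵐ ω ∂(ℙ : Measure Ω), (ouA X n Δ ω - ouF X (n * Δ) ω) ^ 2 ≤
      1 / Δ * ∑ k ∈ Finset.range n,
        (∫ u in ((k:ℝ) * Δ)..(k * Δ + Δ), (Z (k * Δ) ω - Z u ω)) ^ 2 := by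
    filter_upwards [hZ] with ω hω
    have hcell : ∀ k : ℕ, ∫ u in ((k:ℝ) * Δ)..(k * Δ + Δ), (Z (k * Δ) ω - Z u ω)
        = Δ * Z (k * Δ) ω - ∫ u in ((k:ℝ) * Δ)..(((k+1 : ℕ) : ℝ) * Δ), Z u ω := by
      intro k
      have e : ((k+1 : ℕ) : ℝ) * Δ = k * Δ + Δ := by push_cast; ring
      rw [e, intervalIntegral.integral_sub (by simp) ((hc ω).intervalIntegrable _ _)]
      simp
    have hadj := intervalIntegral.sum_integral_adjacent_intervals (f := fun u => Z u ω)
      (μ := volume) (a := fun k : ℕ => (k:ℝ) * Δ) (n := n)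
      (fun k _ => (hc ω).intervalIntegrable _ _)
    have hF : ∫ u in (0:ℝ)..(n * Δ), X 0 u ω * X 1 u ω = ∫ u in (0:ℝ)..(n * Δ), Z u ω := by
      apply intervalIntegral.integral_congr
      intro u hu
      rw [Set.uIcc_of_le (by positivity)] at hu
      exact (hω u hu.1).symm
    have hA : ∑ k ∈ Finset.range n, X 0 (k * Δ) ω * X 1 (k * Δ) ω
        = ∑ k ∈ Finset.range n, Z (k * Δ) ω :=
      Finset.sum_congr rfl fun k _ => (hω _ (by positivity)).symm
    have hsum : ∑ k ∈ Finset.range n, ∫ u in ((k:ℝ) * Δ)..(k * Δ + Δ), (Z (k * Δ) ω - Z u ω)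
        = Δ * (∑ k ∈ Finset.range n, Z (k * Δ) ω) - ∫ u in (0:ℝ)..(n * Δ), Z u ω := by
      simp_rw [hcell]
      rw [Finset.sum_sub_distrib, ← Finset.mul_sum, hadj]
      simp
    have hT : 0 < (n:ℝ) * Δ := by positivity
    have hsq : Real.sqrt (n * Δ) ^ 2 = n * Δ := Real.sq_sqrt hT.le
    have hsp : 0 < Real.sqrt (n * Δ) := Real.sqrt_pos.2 hT
    have hco : Real.sqrt (n * Δ) / n = Δ / Real.sqrt (n * Δ) := by
      rw [div_eq_div_iff hn0.ne' hsp.ne', ← sq, hsq]; ring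
    have hδ : ouA X n Δ ω - ouF X (n * Δ) ω = (1 / Real.sqrt (n * Δ)) *
        ∑ k ∈ Finset.range n, ∫ u in ((k:ℝ) * Δ)..(k * Δ + Δ), (Z (k * Δ) ω - Z u ω) := by
      rw [hsum, ouA, ouF, hF, hA, hco]; ring
    have hcs := sq_sum_le_card_mul_sum_sq (s := Finset.range n)
      (f := fun k : ℕ => ∫ u in ((k:ℝ) * Δ)..(k * Δ + Δ), (Z (k * Δ) ω - Z u ω))
    rw [Finset.card_range] at hcs
    rw [hδ, mul_pow, div_pow, hsq, one_pow]
    calc _ ≤ 1 / ((n:ℝ) * Δ) * (n * ∑ k ∈ Finset.range n,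
        (∫ u in ((k:ℝ) * Δ)..(k * Δ + Δ), (Z (k * Δ) ω - Z u ω)) ^ 2) := by gcongr
      _ = _ := by field_simp
  have hI := (integrable_finsetSum (Finset.range n) fun k _ => (hb k).1).const_mul (1 / Δ)
  calc _ ≤ _ := integral_mono_of_nonneg (Eventually.of_forall fun ω => sq_nonneg _) hI hpt
    _ = 1 / Δ * ∑ k ∈ Finset.range n,
        ∫ ω, (∫ u in ((k:ℝ) * Δ)..(k * Δ + Δ), (Z (k * Δ) ω - Z u ω)) ^ 2 ∂ℙ := by
      rw [integral_const_mul, integral_finsetSum _ fun k _ => (hb k).1]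
    _ ≤ 1 / Δ * ∑ k ∈ Finset.range n, Δ ^ 3 / θ := by
      gcongr with k _
      exact (hb k).2
    _ = _ := by
      rw [Finset.sum_const, Finset.card_range, nsmul_eq_mul]; field_simp

/-- the discretization error `δ(n) = A(n) − F_{Tₙ}` (with `Tₙ = nΔₙ`)
satisfies `E[δ(n)²] ≤ C_θ·n·Δₙ²` with `C_θ = 4·max(8/(9θ), (√2/3)θ^{−1/2}, 1/4)`;
in particular if `Δₙ → 0` and `nΔₙ² → 0` then `E[δ(n)²] → 0`. -/
theorem stmt_11 (θ : ℝ) (hθ : 0 < θ) [IsProbabilityMeasure (ℙ : Measure Ω)]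
    (X : Fin 2 → ℝ → Ω → ℝ) (hX : IsOUPair θ X) :
    (∀ n : ℕ, 1 ≤ n → ∀ Δ : ℝ, 0 < Δ → Δ ≤ 1 →
      ∫ ω, (ouA X n Δ ω - ouF X (n * Δ) ω) ^ 2 ∂ℙ
        ≤ (4 * max (8 / (9 * θ)) (max (Real.sqrt 2 / 3 * (1 / Real.sqrt θ)) (1 / 4)))
            * ((n : ℝ) * Δ ^ 2)) ∧
    (∀ Δ : ℕ → ℝ, (∀ n, 0 < Δ n) → Tendsto Δ atTop (𝓝 0) →
      Tendsto (fun n : ℕ => (n : ℝ) * (Δ n) ^ 2) atTop (𝓝 0) →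
      Tendsto (fun n : ℕ => ∫ ω, (ouA X n (Δ n) ω - ouF X (n * Δ n) ω) ^ 2 ∂ℙ)
        atTop (𝓝 0)) := by
  constructor
  · intro n hn Δ hΔ _
    refine (ou_main hθ hX hn hΔ).trans ?_
    gcongr
    have h1 : 8 / (9 * θ) ≤
      max (8 / (9 * θ)) (max (Real.sqrt 2 / 3 * (1 / Real.sqrt θ)) (1 / 4)) := le_max_left _ _
    have h2 : 1 / θ ≤ 4 * (8 / (9 * θ)) := by
      rw [← mul_div_assoc, div_le_div_iff₀ hθ (by positivity)]
      linarith
    linarith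
  · intro Δ hΔ _ h
    have h' := h.const_mul (1 / θ)
    rw [mul_zero] at h'
    refine tendsto_of_tendsto_of_tendsto_of_le_of_le' tendsto_const_nhds h'
      (Eventually.of_forall fun n => integral_nonneg fun ω => sq_nonneg _) ?_
    filter_upwards [eventually_ge_atTop 1] with n hn
    exact ou_main hθ hX hn (hΔ n)

end
end

section
/- For every θ > 0 there exists a constant C(θ) > 0, depending only on θ, such that for every integer n ≥ 1 and every mesh Δₙ with 0 < Δₙ ≤ 1 and nΔₙ ≥ 1, d_Kol( A(n), N(0, 1/(4θ³)) ) ≤ C(θ) · max( (nΔₙ)^{−1/2}, (nΔₙ²)^{1/3} ). In particular, if Δₙ → 0, nΔₙ → ∞ and nΔₙ² → 0 as n → ∞, then A(n) converges in distribution to N(0, 1/(4θ³)). -/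
open MeasureTheory ProbabilityTheory Real Filter Finset
open scoped Topology ENNReal NNReal

noncomputable section

variable {Ω : Type} [MeasureSpace Ω]

lemma gauss_inc (b c M : ℝ) (hbc : b ≤ c) (hM : ∀ x ∈ Set.Ioc b c, gaussianPDFReal 0 1 x ≤ M) :
    |(gaussianReal 0 1 (Set.Iic c)).toReal - (gaussianReal 0 1 (Set.Iic b)).toReal|
      ≤ M * (c - b) := by
  have h1 : (gaussianReal 0 1).real (Set.Iic c)
      = (gaussianReal 0 1).real (Set.Iic b) + (gaussianReal 0 1).real (Set.Ioc b c) := by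
    rw [← measureReal_union, Set.Iic_union_Ioc_eq_Iic hbc]
    · exact Set.Iic_disjoint_Ioc le_rfl
    · exact measurableSet_Ioc
  have h2 : (gaussianReal 0 1).real (Set.Ioc b c) = ∫ x in Set.Ioc b c, gaussianPDFReal 0 1 x := by
    rw [measureReal_def, gaussianReal_apply_eq_integral _ one_ne_zero, ENNReal.toReal_ofReal]
    exact integral_nonneg (fun x => gaussianPDFReal_nonneg _ _ _)
  have h3 : ‖∫ x in Set.Ioc b c, gaussianPDFReal 0 1 x‖ ≤ M * volume.real (Set.Ioc b c) := by
    apply norm_setIntegral_le_of_norm_le_const (by simp)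
    intro x hx
    rw [Real.norm_of_nonneg (gaussianPDFReal_nonneg _ _ _)]
    exact hM x hx
  simp only [measureReal_def] at h1 h2
  rw [h1, add_sub_cancel_left, h2]
  simpa [measureReal_def, hbc] using h3

lemma pdf_le (a x : ℝ) (h : |a| ≤ |x|) : gaussianPDFReal 0 1 x ≤ Real.exp (-a ^ 2 / 2) := by
  have hax : a ^ 2 ≤ x ^ 2 := sq_le_sq.mpr h
  rw [gaussianPDFReal_def]
  have h1 : (√(2 * π * ((1 : ℝ≥0) : ℝ)))⁻¹ ≤ 1 := by
    apply inv_le_one_of_one_le₀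
    rw [Real.one_le_sqrt]
    simp only [NNReal.coe_one, mul_one]
    linarith [Real.pi_gt_three]
  have h2 : rexp (-(x - 0) ^ 2 / (2 * ((1 : ℝ≥0) : ℝ))) ≤ rexp (-a ^ 2 / 2) := by
    apply Real.exp_le_exp.mpr
    simp
    linarith
  calc _ ≤ 1 * rexp (-a ^ 2 / 2) := by
        apply mul_le_mul h1 h2 (Real.exp_nonneg _) zero_le_one
    _ = _ := one_mul _

lemma abs_mul_exp_le (a : ℝ) : |a| * Real.exp (-a ^ 2 / 2) ≤ 1 := by
  have h : |a| ≤ Real.exp (a ^ 2 / 2) := by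
    have := Real.add_one_le_exp (a ^ 2 / 2)
    nlinarith [sq_nonneg (|a| - 1), sq_abs a]
  have e : -a ^ 2 / 2 = -(a ^ 2 / 2) := by ring
  rw [e, Real.exp_neg]
  rw [← div_eq_mul_inv, div_le_one (Real.exp_pos _)]
  exact h

lemma gauss_scale (a r : ℝ) (hr : 1 ≤ r) :
    |(gaussianReal 0 1 (Set.Iic (r * a))).toReal - (gaussianReal 0 1 (Set.Iic a)).toReal|
      ≤ r - 1 := by
  have key : Real.exp (-a ^ 2 / 2) * (|a| * (r - 1)) ≤ r - 1 := by
    have := abs_mul_exp_le a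
    nlinarith
  rcases le_total 0 a with ha | ha
  · have h1 : a ≤ r * a := by nlinarith
    have := gauss_inc a (r * a) (Real.exp (-a ^ 2 / 2)) h1 (by
      intro x hx
      apply pdf_le
      rw [abs_of_nonneg ha, abs_of_nonneg (ha.trans hx.1.le)]
      exact hx.1.le)
    rw [abs_of_nonneg ha] at key
    refine this.trans (le_trans (le_of_eq ?_) key)
    ring
  · have h1 : r * a ≤ a := by nlinarith
    have := gauss_inc (r * a) a (Real.exp (-a ^ 2 / 2)) h1 (by
      intro x hx
      apply pdf_le
      rw [abs_of_nonpos ha, abs_of_nonpos (hx.2.trans ha)]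
      linarith [hx.2])
    rw [abs_of_nonpos ha] at key
    rw [abs_sub_comm]
    refine this.trans (le_trans (le_of_eq ?_) key)
    ring

lemma gauss_std (v : ℝ≥0) (hv : v ≠ 0) (z : ℝ) :
    gaussianReal 0 v (Set.Iic z) = gaussianReal 0 1 (Set.Iic (z / √(v : ℝ))) := by
  have hv' : 0 < √(v : ℝ) := Real.sqrt_pos.mpr (by positivity)
  have h := gaussianReal_map_const_mul (μ := 0) (v := 1) (√(v : ℝ))
  have e : (NNReal.mk (√(v : ℝ) ^ 2) (sq_nonneg _)) * 1 = v := by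
    ext
    simp
  rw [mul_zero, e] at h
  rw [← h, Measure.map_apply (by fun_prop) measurableSet_Iic]
  congr 1
  ext x
  simp only [Set.mem_preimage, Set.mem_Iic]
  rw [le_div_iff₀ hv', mul_comm]

lemma gauss_kol (v w : ℝ≥0) (hw : w ≠ 0) (z : ℝ) :
    |(gaussianReal 0 v (Set.Iic z)).toReal - (gaussianReal 0 w (Set.Iic z)).toReal|
      ≤ 2 * |(v : ℝ) / w - 1| := by
  have hw0 : (0 : ℝ) < w := by positivity
  by_cases hhalf : (v : ℝ) < w / 2
  · have h1 : (gaussianReal 0 v (Set.Iic z)).toReal ≤ 1 := measureReal_le_one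
    have h2 : (gaussianReal 0 w (Set.Iic z)).toReal ≤ 1 := measureReal_le_one
    have h3 : 0 ≤ (gaussianReal 0 v (Set.Iic z)).toReal := ENNReal.toReal_nonneg
    have h4 : 0 ≤ (gaussianReal 0 w (Set.Iic z)).toReal := ENNReal.toReal_nonneg
    have h5 : (v : ℝ) / w < 1 / 2 := by
      rw [div_lt_iff₀ hw0]; linarith
    rw [abs_of_neg (by linarith : (v : ℝ) / w - 1 < 0)]
    rw [abs_le]
    constructor <;> linarith
  push Not at hhalf
  have hv0 : (0 : ℝ) < v := by linarith
  have hv : v ≠ 0 := by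
    rintro rfl
    simp at hv0
  rw [gauss_std v hv, gauss_std w hw]
  have sv : 0 < √(v : ℝ) := Real.sqrt_pos.mpr hv0
  have sw : 0 < √(w : ℝ) := Real.sqrt_pos.mpr hw0
  rcases le_total (w : ℝ) v with h | h
  · have hr : 1 ≤ √(v : ℝ) / √(w : ℝ) := by
      rw [le_div_iff₀ sw, one_mul]
      exact Real.sqrt_le_sqrt h
    have := gauss_scale (z / √(v : ℝ)) _ hr
    have e : √(v : ℝ) / √(w : ℝ) * (z / √(v : ℝ)) = z / √(w : ℝ) := by field_simp
    rw [e, abs_sub_comm] at this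
    refine this.trans ?_
    have e2 : (√(v : ℝ) / √(w : ℝ)) ^ 2 = (v : ℝ) / w := by
      rw [div_pow, Real.sq_sqrt hv0.le, Real.sq_sqrt hw0.le]
    rw [← e2, abs_of_nonneg (by nlinarith)]
    nlinarith
  · have hr : 1 ≤ √(w : ℝ) / √(v : ℝ) := by
      rw [le_div_iff₀ sv, one_mul]
      exact Real.sqrt_le_sqrt h
    have := gauss_scale (z / √(w : ℝ)) _ hr
    have e : √(w : ℝ) / √(v : ℝ) * (z / √(w : ℝ)) = z / √(v : ℝ) := by field_simp
    rw [e] at this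
    refine this.trans ?_
    have e2 : (√(w : ℝ) / √(v : ℝ)) ^ 2 = (w : ℝ) / v := by
      rw [div_pow, Real.sq_sqrt hv0.le, Real.sq_sqrt hw0.le]
    have e3 : √(w : ℝ) / √(v : ℝ) ≤ (w : ℝ) / v := by
      rw [← e2]; nlinarith
    have e4 : (v : ℝ) / w ≤ 1 := by rw [div_le_one hw0]; exact h
    rw [abs_of_nonpos (by linarith)]
    have e5 : (w : ℝ) / v - 1 ≤ 2 * (1 - (v : ℝ) / w) := by
      have a1 : (w : ℝ) / v - 1 = (w - v) / v := by field_simp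
      have a2 : 2 * (1 - (v : ℝ) / w) = (w - v) / (w / 2) := by field_simp
      rw [a1, a2]
      apply div_le_div_of_nonneg_left (by linarith) (by linarith) hhalf
    linarith

lemma gauss_m4 (v : ℝ≥0) : ∫ x, x ^ 4 ∂(gaussianReal 0 v) = 3 * (v : ℝ) ^ 2 := by
  have h0 : ∫ x, x ^ 4 ∂(gaussianReal 0 v)
      = iteratedDeriv 4 (mgf (fun x ↦ x) (gaussianReal 0 v)) 0 := by
    rw [iteratedDeriv_mgf_zero] <;> simp
  rw [h0, mgf_fun_id_gaussianReal]
  simp only [zero_mul, zero_add]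
  have hE : ∀ t : ℝ, HasDerivAt (fun t : ℝ => rexp (v * t ^ 2 / 2))
      (v * t * rexp (v * t ^ 2 / 2)) t := by
    intro t
    have h1 : HasDerivAt (fun t : ℝ => (v : ℝ) * t ^ 2 / 2) (v * t) t := by
      have := ((hasDerivAt_pow 2 t).const_mul (v : ℝ)).div_const 2
      refine this.congr_deriv ?_
      norm_num
      try ring
    convert h1.exp using 1
    ring
  have d1 : deriv (fun t : ℝ => rexp (v * t ^ 2 / 2))
      = fun t : ℝ => v * t * rexp (v * t ^ 2 / 2) := by
    ext t; exact (hE t).deriv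
  have d2 : deriv (fun t : ℝ => v * t * rexp (v * t ^ 2 / 2))
      = fun t : ℝ => (v + v ^ 2 * t ^ 2) * rexp (v * t ^ 2 / 2) := by
    ext t
    have := ((hasDerivAt_id t).const_mul (v : ℝ)).mul (hE t)
    refine (HasDerivAt.deriv (f := fun t : ℝ => v * t * rexp (v * t ^ 2 / 2)) this).trans ?_
    simp
    ring
  have d3 : deriv (fun t : ℝ => (v + v ^ 2 * t ^ 2) * rexp (v * t ^ 2 / 2))
      = fun t : ℝ => (3 * v ^ 2 * t + v ^ 3 * t ^ 3) * rexp (v * t ^ 2 / 2) := by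
    ext t
    have := (((hasDerivAt_pow 2 t).const_mul ((v : ℝ) ^ 2)).const_add (v : ℝ)).mul (hE t)
    refine (HasDerivAt.deriv
      (f := fun t : ℝ => (v + v ^ 2 * t ^ 2) * rexp (v * t ^ 2 / 2)) this).trans ?_
    simp
    ring
  have d4 : deriv (fun t : ℝ => (3 * v ^ 2 * t + v ^ 3 * t ^ 3) * rexp (v * t ^ 2 / 2)) 0
      = 3 * (v : ℝ) ^ 2 := by
    have := (((hasDerivAt_id (0 : ℝ)).const_mul (3 * (v : ℝ) ^ 2)).add
      ((hasDerivAt_pow 3 (0 : ℝ)).const_mul ((v : ℝ) ^ 3))).mul (hE 0)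
    refine (HasDerivAt.deriv
      (f := fun t : ℝ => (3 * v ^ 2 * t + v ^ 3 * t ^ 3) * rexp (v * t ^ 2 / 2)) this).trans ?_
    simp
  rw [iteratedDeriv_succ, iteratedDeriv_succ, iteratedDeriv_succ, iteratedDeriv_one, d1, d2, d3, d4]

lemma gauss_m2 (v : ℝ≥0) : ∫ x, x ^ 2 ∂(gaussianReal 0 v) = (v : ℝ) := by
  have h := variance_fun_id_gaussianReal (μ := 0) (v := v)
  rw [variance_eq_integral measurable_id'.aemeasurable] at h
  simpa using h

section moments
variable {S : Type} [MeasurableSpace S] {P : Measure S}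

lemma law_facts {Y : S → ℝ} (hY : Measurable Y) {v : ℝ≥0} (h : P.map Y = gaussianReal 0 v) :
    Integrable (fun s => Y s ^ 2) P ∧ Integrable (fun s => Y s ^ 4) P ∧ ∫ s, Y s ^ 2 ∂P = v ∧
      ∫ s, Y s ^ 4 ∂P = 3 * (∫ s, Y s ^ 2 ∂P) ^ 2 := by
  have i2 : ∫ s, Y s ^ 2 ∂P = v := by
    rw [← gauss_m2, ← h, integral_map hY.aemeasurable (by fun_prop)]
  have i4 : ∫ s, Y s ^ 4 ∂P = 3 * (v : ℝ) ^ 2 := by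
    rw [← gauss_m4, ← h, integral_map hY.aemeasurable (by fun_prop)]
  have key : ∀ k : ℕ, Integrable (fun s => Y s ^ k) P := by
    intro k
    have : Integrable (fun x : ℝ => x ^ k) (P.map Y) := by
      rw [h]
      have := (memLp_id_gaussianReal (μ := 0) (v := v) k).integrable_norm_pow'
      refine (integrable_norm_iff (continuous_pow k).aestronglyMeasurable).mp ?_
      simpa using this
    exact (integrable_map_measure (continuous_pow k).aestronglyMeasurable hY.aemeasurable).mp this
  exact ⟨key 2, key 4, i2, by rw [i4, i2]⟩

variable {L : Submodule ℝ (S → ℝ)}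

lemma gl_facts
    (hL : ∀ f ∈ L, Measurable f ∧ ∃ v : ℝ≥0, P.map f = gaussianReal 0 v)
    {Y : S → ℝ} (hY : Y ∈ L) :
    Integrable (fun s => Y s ^ 2) P ∧ Integrable (fun s => Y s ^ 4) P ∧
      ∫ s, Y s ^ 4 ∂P = 3 * (∫ s, Y s ^ 2 ∂P) ^ 2 := by
  obtain ⟨hm, v, hv⟩ := hL Y hY
  obtain ⟨a, b, _, c⟩ := law_facts hm hv
  exact ⟨a, b, c⟩

lemma gl_mul
    (hL : ∀ f ∈ L, Measurable f ∧ ∃ v : ℝ≥0, P.map f = gaussianReal 0 v)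
    {Y Z : S → ℝ} (hY : Y ∈ L) (hZ : Z ∈ L) :
    Integrable (fun s => Y s * Z s) P ∧
    ∫ s, Y s * Z s ∂P = (∫ s, (Y s + Z s) ^ 2 ∂P - ∫ s, (Y s - Z s) ^ 2 ∂P) / 4 ∧
    ∫ s, (Y s + Z s) ^ 2 ∂P + ∫ s, (Y s - Z s) ^ 2 ∂P
      = 2 * (∫ s, Y s ^ 2 ∂P + ∫ s, Z s ^ 2 ∂P) := by
  obtain ⟨p2, _, _⟩ := gl_facts hL (L.add_mem hY hZ)
  obtain ⟨m2, _, _⟩ := gl_facts hL (L.sub_mem hY hZ)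
  obtain ⟨y2, _, _⟩ := gl_facts hL hY
  obtain ⟨z2, _, _⟩ := gl_facts hL hZ
  simp only [Pi.add_apply, Pi.sub_apply] at p2 m2
  have e : (fun s => Y s * Z s) = fun s => ((Y s + Z s) ^ 2 - (Y s - Z s) ^ 2) / 4 := by
    ext s; ring
  refine ⟨?_, ?_, ?_⟩
  · rw [e]; exact (p2.sub m2).div_const 4
  · rw [e, integral_div, integral_sub p2 m2]
  · rw [← integral_add p2 m2, ← integral_add y2 z2, ← integral_const_mul]
    congr 1
    ext s; ring

lemma gl_sq
    (hL : ∀ f ∈ L, Measurable f ∧ ∃ v : ℝ≥0, P.map f = gaussianReal 0 v)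
    {Y Z : S → ℝ} (hY : Y ∈ L) (hZ : Z ∈ L) :
    Integrable (fun s => Y s ^ 2 * Z s ^ 2) P ∧
    ∫ s, Y s ^ 2 * Z s ^ 2 ∂P
      = (∫ s, Y s ^ 2 ∂P) * (∫ s, Z s ^ 2 ∂P) + 2 * (∫ s, Y s * Z s ∂P) ^ 2 := by
  obtain ⟨p2, p4, pe⟩ := gl_facts hL (L.add_mem hY hZ)
  obtain ⟨m2, m4, me⟩ := gl_facts hL (L.sub_mem hY hZ)
  obtain ⟨y2, y4, ye⟩ := gl_facts hL hY
  obtain ⟨z2, z4, ze⟩ := gl_facts hL hZ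
  obtain ⟨_, c, d⟩ := gl_mul hL hY hZ
  simp only [Pi.add_apply, Pi.sub_apply] at p2 m2 p4 m4 pe me
  have e : (fun s => Y s ^ 2 * Z s ^ 2)
      = fun s => ((Y s + Z s) ^ 4 + (Y s - Z s) ^ 4 - 2 * (Y s ^ 4 + Z s ^ 4)) / 12 := by
    ext s; ring
  have i1 := p4.add m4
  have i2 := (y4.add z4).const_mul 2
  have i3 := (i1.sub i2).div_const 12
  refine ⟨?_, ?_⟩
  · rw [e]; exact i3
  · rw [e, integral_div, integral_sub (f := fun s => (Y s + Z s) ^ 4 + (Y s - Z s) ^ 4)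
      (g := fun s => 2 * (Y s ^ 4 + Z s ^ 4)) i1 i2, integral_const_mul,
      integral_add p4 m4, integral_add y4 z4, pe, me, ye, ze, c]
    generalize ∫ s, (Y s + Z s) ^ 2 ∂P = A at *
    generalize ∫ s, (Y s - Z s) ^ 2 ∂P = B at *
    generalize ∫ s, Y s ^ 2 ∂P = a at *
    generalize ∫ s, Z s ^ 2 ∂P = b at *
    have : A = 2 * (a + b) - B := by linarith
    subst this
    ring

lemma isserlis
    (hL : ∀ f ∈ L, Measurable f ∧ ∃ v : ℝ≥0, P.map f = gaussianReal 0 v)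
    {a b c d : S → ℝ} (ha : a ∈ L) (hb : b ∈ L) (hc : c ∈ L) (hd : d ∈ L) :
    Integrable (fun s => (a s * b s) * (c s * d s)) P ∧
    ∫ s, (a s * b s) * (c s * d s) ∂P
      = (∫ s, a s * b s ∂P) * (∫ s, c s * d s ∂P) + (∫ s, a s * c s ∂P) * (∫ s, b s * d s ∂P)
        + (∫ s, a s * d s ∂P) * (∫ s, b s * c s ∂P) := by
  have hp := L.add_mem ha hb
  have hm := L.sub_mem ha hb
  have hq := L.add_mem hc hd
  have hn := L.sub_mem hc hd
  obtain ⟨i1, e1⟩ := gl_sq hL hp hq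
  obtain ⟨i2, e2⟩ := gl_sq hL hp hn
  obtain ⟨i3, e3⟩ := gl_sq hL hm hq
  obtain ⟨i4, e4⟩ := gl_sq hL hm hn
  have bil : ∀ x y u : S → ℝ, x ∈ L → y ∈ L → u ∈ L →
      ∫ s, (x s + y s) * u s ∂P = ∫ s, x s * u s ∂P + ∫ s, y s * u s ∂P ∧
      ∫ s, (x s - y s) * u s ∂P = ∫ s, x s * u s ∂P - ∫ s, y s * u s ∂P ∧
      ∫ s, u s * (x s + y s) ∂P = ∫ s, u s * x s ∂P + ∫ s, u s * y s ∂P ∧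
      ∫ s, u s * (x s - y s) ∂P = ∫ s, u s * x s ∂P - ∫ s, u s * y s ∂P := by
    intro x y u hx hy hu
    simp only [add_mul, sub_mul, mul_add, mul_sub]
    exact ⟨integral_add (gl_mul hL hx hu).1 (gl_mul hL hy hu).1,
      integral_sub (gl_mul hL hx hu).1 (gl_mul hL hy hu).1,
      integral_add (gl_mul hL hu hx).1 (gl_mul hL hu hy).1,
      integral_sub (gl_mul hL hu hx).1 (gl_mul hL hu hy).1⟩
  have sqp : ∀ x y : S → ℝ, x ∈ L → y ∈ L →
      ∫ s, (x s + y s) ^ 2 ∂P = ∫ s, x s ^ 2 ∂P + 2 * ∫ s, x s * y s ∂P + ∫ s, y s ^ 2 ∂P ∧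
      ∫ s, (x s - y s) ^ 2 ∂P = ∫ s, x s ^ 2 ∂P - 2 * ∫ s, x s * y s ∂P + ∫ s, y s ^ 2 ∂P := by
    intro x y hx hy
    obtain ⟨_, h1, h2⟩ := gl_mul hL hx hy
    constructor <;> linarith
  have pm : ∀ x y : S → ℝ, x ∈ L → y ∈ L → ∀ u w : S → ℝ, u ∈ L → w ∈ L →
      ∫ s, (x s + y s) * (u s + w s) ∂P = ∫ s, x s * u s ∂P + ∫ s, x s * w s ∂P
        + ∫ s, y s * u s ∂P + ∫ s, y s * w s ∂P ∧
      ∫ s, (x s + y s) * (u s - w s) ∂P = ∫ s, x s * u s ∂P - ∫ s, x s * w s ∂P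
        + ∫ s, y s * u s ∂P - ∫ s, y s * w s ∂P ∧
      ∫ s, (x s - y s) * (u s + w s) ∂P = ∫ s, x s * u s ∂P + ∫ s, x s * w s ∂P
        - ∫ s, y s * u s ∂P - ∫ s, y s * w s ∂P ∧
      ∫ s, (x s - y s) * (u s - w s) ∂P = ∫ s, x s * u s ∂P - ∫ s, x s * w s ∂P
        - ∫ s, y s * u s ∂P + ∫ s, y s * w s ∂P := by
    intro x y hx hy u w hu hw
    have A1 := (bil x y (u + w) hx hy (L.add_mem hu hw))
    have A2 := (bil x y (u - w) hx hy (L.sub_mem hu hw))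
    have B1 := bil u w x hu hw hx
    have B2 := bil u w y hu hw hy
    simp only [Pi.add_apply, Pi.sub_apply] at A1 A2
    refine ⟨?_, ?_, ?_, ?_⟩
    · rw [A1.1, B1.2.2.1, B2.2.2.1]; ring
    · rw [A2.1, B1.2.2.2, B2.2.2.2]; ring
    · rw [A1.2.1, B1.2.2.1, B2.2.2.1]; ring
    · rw [A2.2.1, B1.2.2.2, B2.2.2.2]; ring
  simp only [Pi.add_apply, Pi.sub_apply] at i1 i2 i3 i4 e1 e2 e3 e4
  have e : (fun s => (a s * b s) * (c s * d s)) = fun s =>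
      (((a s + b s) ^ 2 * (c s + d s) ^ 2 - (a s + b s) ^ 2 * (c s - d s) ^ 2)
      - ((a s - b s) ^ 2 * (c s + d s) ^ 2 - (a s - b s) ^ 2 * (c s - d s) ^ 2)) / 16 := by
    ext s; ring
  have j1 := i1.sub i2
  have j2 := i3.sub i4
  refine ⟨?_, ?_⟩
  · rw [e]; exact (j1.sub j2).div_const 16
  · obtain ⟨P1, P2, P3, P4⟩ := pm a b ha hb c d hc hd
    rw [e, integral_div, integral_sub
      (f := fun s => (a s + b s) ^ 2 * (c s + d s) ^ 2 - (a s + b s) ^ 2 * (c s - d s) ^ 2)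
      (g := fun s => (a s - b s) ^ 2 * (c s + d s) ^ 2 - (a s - b s) ^ 2 * (c s - d s) ^ 2) j1 j2,
      integral_sub i1 i2, integral_sub i3 i4, e1, e2, e3, e4, P1, P2, P3, P4,
      (sqp a b ha hb).1, (sqp a b ha hb).2, (sqp c d hc hd).1, (sqp c d hc hd).2]
    ring

end moments

section vec
variable {S : Type} [MeasurableSpace S] {P : Measure S}

lemma span_gauss {n : ℕ} (x : Fin n → S → ℝ) (hx : ∀ i, Measurable (x i))
    (hg : ∀ c : Fin n → ℝ, ∃ v : ℝ≥0, P.map (fun s => ∑ j, c j * x j s) = gaussianReal 0 v) :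
    ∀ f ∈ Submodule.span ℝ (Set.range x),
      Measurable f ∧ ∃ v : ℝ≥0, P.map f = gaussianReal 0 v := by
  intro f hf
  obtain ⟨c, rfl⟩ := (Submodule.mem_span_range_iff_exists_fun ℝ).mp hf
  have e : (∑ i, c i • x i) = fun s => ∑ j, c j * x j s := by
    ext s; simp
  rw [e]
  exact ⟨by fun_prop, hg c⟩

lemma mix {n : ℕ} [IsProbabilityMeasure P] (x y : Fin n → S → ℝ) (hx : ∀ i, Measurable (x i))
    (hy : ∀ i, Measurable (y i))
    (hg : ∀ c : Fin n → ℝ, ∃ v : ℝ≥0, P.map (fun s => ∑ j, c j * y j s) = gaussianReal 0 v)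
    (hind : IndepFun (fun s i => x i s) (fun s i => y i s) P)
    (K : Fin n → Fin n → ℝ) (hK : ∀ i j, ∫ s, y i s * y j s ∂P = K i j)
    (a : ℝ) (w : ℝ≥0) (hw : w ≠ 0) (z : ℝ)
    (hint : Integrable (fun s => ∑ i, ∑ j, K i j * (x i s * x j s)) P) :
    |(P.map (fun s => a * ∑ i, x i s * y i s) (Set.Iic z)).toReal
      - (gaussianReal 0 w (Set.Iic z)).toReal|
      ≤ ∫ s, 2 * |a ^ 2 * (∑ i, ∑ j, K i j * (x i s * x j s)) / w - 1| ∂P := by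
  set X : S → (Fin n → ℝ) := fun s i => x i s with hX
  set Y : S → (Fin n → ℝ) := fun s i => y i s with hY
  have hXm : Measurable X := measurable_pi_lambda _ hx
  have hYm : Measurable Y := measurable_pi_lambda _ hy
  have : IsProbabilityMeasure (P.map X) := Measure.isProbabilityMeasure_map hXm.aemeasurable
  have : IsProbabilityMeasure (P.map Y) := Measure.isProbabilityMeasure_map hYm.aemeasurable
  have hprod := (indepFun_iff_map_prod_eq_prod_map_map hXm.aemeasurable hYm.aemeasurable).mp hind
  let f : (Fin n → ℝ) × (Fin n → ℝ) → ℝ := fun p => a * ∑ i, p.1 i * p.2 i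
  have hf : Measurable f := by fun_prop
  have hA : P.map (fun s => a * ∑ i, x i s * y i s)
      = ((P.map X).prod (P.map Y)).map f := by
    rw [← hprod, Measure.map_map hf (by fun_prop)]
    rfl
  have hset : MeasurableSet (f ⁻¹' Set.Iic z) := hf measurableSet_Iic
  let g : (Fin n → ℝ) → ℝ := fun p => ((P.map Y) (Prod.mk p ⁻¹' (f ⁻¹' Set.Iic z))).toReal
  have hgm : Measurable g := (measurable_measure_prodMk_left hset).ennreal_toReal
  have hmain : (P.map (fun s => a * ∑ i, x i s * y i s) (Set.Iic z)).toReal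
      = ∫ p, g p ∂(P.map X) := by
    rw [hA, Measure.map_apply hf measurableSet_Iic, Measure.prod_apply hset]
    rw [integral_toReal (measurable_measure_prodMk_left hset).aemeasurable]
    exact Eventually.of_forall (fun p => measure_lt_top _ _)
  have hgi : Integrable g (P.map X) := by
    refine Integrable.of_bound hgm.aestronglyMeasurable 1 (Eventually.of_forall fun p => ?_)
    rw [Real.norm_of_nonneg ENNReal.toReal_nonneg]
    exact measureReal_le_one
  have hL := span_gauss y hy hg
  have hyL : ∀ i, y i ∈ Submodule.span ℝ (Set.range y) := fun i =>
    Submodule.subset_span ⟨i, rfl⟩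
  have hgp : ∀ p, |g p - (gaussianReal 0 w (Set.Iic z)).toReal|
      ≤ 2 * |a ^ 2 * (∑ i, ∑ j, K i j * (p i * p j)) / w - 1| := by
    intro p
    obtain ⟨v, hv⟩ := hg (fun j => a * p j)
    have e1 : g p = (gaussianReal 0 v (Set.Iic z)).toReal := by
      rw [← hv]
      simp only [g]
      rw [Measure.map_apply hYm (measurable_prodMk_left hset),
        Measure.map_apply (by fun_prop) measurableSet_Iic]
      congr 2
      ext s
      simp [f, Y, Finset.mul_sum, mul_assoc]
    have e2 : a ^ 2 * (∑ i, ∑ j, K i j * (p i * p j)) = v := by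
      rw [← (law_facts (by fun_prop) hv).2.2.1]
      have : (fun s => (∑ j, a * p j * y j s) ^ 2)
          = fun s => ∑ i, ∑ j, (a * p i) * (a * p j) * (y i s * y j s) := by
        ext s
        rw [sq, Finset.sum_mul_sum]
        refine Finset.sum_congr rfl fun i _ => Finset.sum_congr rfl fun j _ => ?_
        ring
      have I : ∀ i j, Integrable (fun s => (a * p i) * (a * p j) * (y i s * y j s)) P :=
        fun i j => (gl_mul hL (hyL i) (hyL j)).1.const_mul _
      rw [this, integral_finsetSum _ (fun i _ => integrable_finsetSum _ (fun j _ => I i j))]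
      rw [Finset.mul_sum]
      refine Finset.sum_congr rfl fun i _ => ?_
      rw [integral_finsetSum _ (fun j _ => I i j), Finset.mul_sum]
      refine Finset.sum_congr rfl fun j _ => ?_
      rw [integral_const_mul, hK]
      ring
    rw [e1, e2]
    exact gauss_kol v w hw z
  have hconst : ∫ p, g p ∂(P.map X) - (gaussianReal 0 w (Set.Iic z)).toReal
      = ∫ p, (g p - (gaussianReal 0 w (Set.Iic z)).toReal) ∂(P.map X) := by
    rw [integral_sub hgi (integrable_const _)]
    simp
  rw [hmain, hconst]
  refine (abs_integral_le_integral_abs).trans ?_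
  rw [integral_map hXm.aemeasurable (by fun_prop)]
  apply integral_mono
  · exact (((integrable_map_measure (by fun_prop) hXm.aemeasurable).mp
      (hgi.sub (integrable_const _))).abs)
  · exact ((((hint.const_mul (a ^ 2)).div_const (w : ℝ)).sub (integrable_const 1)).abs).const_mul 2
  · intro s
    exact hgp (X s)

lemma abs_le_sqrt [IsProbabilityMeasure P] {Q : S → ℝ} (hQm : Measurable Q) (hQ : Integrable Q P)
    (hQ2 : Integrable (fun s => Q s ^ 2) P) (α m W : ℝ) (hα : 0 ≤ α)
    (hW : ∫ s, Q s ^ 2 ∂P - (∫ s, Q s ∂P) ^ 2 ≤ W) :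
    ∫ s, |α * Q s - m| ∂P ≤ α * √W + |α * (∫ s, Q s ∂P) - m| := by
  set q := ∫ s, Q s ∂P with hq
  have hQL : MemLp Q 2 P := (memLp_two_iff_integrable_sq hQm.aestronglyMeasurable).mpr hQ2
  have hA : MemLp (fun s => |Q s - q|) 2 P := (hQL.sub (memLp_const q)).norm
  have h1 := variance_nonneg (fun s => |Q s - q|) P
  rw [variance_eq_sub hA] at h1
  have h2 : ∫ s, ((fun s => |Q s - q|) ^ 2) s ∂P = ∫ s, Q s ^ 2 ∂P - q ^ 2 := by
    have : ((fun s => |Q s - q|) ^ 2) = fun s => (Q s ^ 2 - 2 * q * Q s) + q ^ 2 := by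
      ext s
      simp only [Pi.pow_apply, sq_abs]
      ring
    rw [this, integral_add (f := fun s => Q s ^ 2 - 2 * q * Q s) (g := fun _ => q ^ 2)
      (hQ2.sub (hQ.const_mul _)) (integrable_const _), integral_sub hQ2 (hQ.const_mul _), integral_const_mul, ← hq]
    simp
    ring
  rw [h2] at h1
  have h3 : ∫ s, |Q s - q| ∂P ≤ √W := by
    apply Real.le_sqrt_of_sq_le
    linarith
  have hI : Integrable (fun s => |Q s - q|) P := (hQ.sub (integrable_const q)).abs
  calc ∫ s, |α * Q s - m| ∂P ≤ ∫ s, (α * |Q s - q| + |α * q - m|) ∂P := by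
        apply integral_mono
        · exact ((hQ.const_mul α).sub (integrable_const m)).abs
        · exact (hI.const_mul α).add (integrable_const _)
        · intro s
          have : α * Q s - m = α * (Q s - q) + (α * q - m) := by ring
          simp only [this]
          refine (abs_add_le _ _).trans ?_
          rw [abs_mul, abs_of_nonneg hα]
    _ = α * ∫ s, |Q s - q| ∂P + |α * q - m| := by
        rw [integral_add (hI.const_mul α) (integrable_const _), integral_const_mul]
        simp
    _ ≤ _ := by gcongr

lemma quad {n : ℕ} (x : Fin n → S → ℝ) (hx : ∀ i, Measurable (x i))
    (hg : ∀ c : Fin n → ℝ, ∃ v : ℝ≥0, P.map (fun s => ∑ j, c j * x j s) = gaussianReal 0 v)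
    (K : Fin n → Fin n → ℝ) (hK : ∀ i j, ∫ s, x i s * x j s ∂P = K i j) :
    Integrable (fun s => ∑ i, ∑ j, K i j * (x i s * x j s)) P ∧
    Integrable (fun s => (∑ i, ∑ j, K i j * (x i s * x j s)) ^ 2) P ∧
    ∫ s, (∑ i, ∑ j, K i j * (x i s * x j s)) ∂P = ∑ i, ∑ j, K i j ^ 2 ∧
    ∫ s, (∑ i, ∑ j, K i j * (x i s * x j s)) ^ 2 ∂P - (∑ i, ∑ j, K i j ^ 2) ^ 2
      = ∑ i, ∑ j, ∑ k, ∑ l, K i j * K k l * (K i k * K j l + K i l * K j k) := by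
  have hL := span_gauss x hx hg
  have hxL : ∀ i, x i ∈ Submodule.span ℝ (Set.range x) := fun i =>
    Submodule.subset_span ⟨i, rfl⟩
  have I2 : ∀ i j, Integrable (fun s => K i j * (x i s * x j s)) P :=
    fun i j => (gl_mul hL (hxL i) (hxL j)).1.const_mul _
  have I4 : ∀ i j k l, Integrable
      (fun s => (K i j * K k l) * ((x i s * x j s) * (x k s * x l s))) P :=
    fun i j k l => (isserlis hL (hxL i) (hxL j) (hxL k) (hxL l)).1.const_mul _
  have e : (fun s => (∑ i, ∑ j, K i j * (x i s * x j s)) ^ 2) = fun s =>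
      ∑ i, ∑ j, ∑ k, ∑ l, (K i j * K k l) * ((x i s * x j s) * (x k s * x l s)) := by
    ext s
    rw [sq, Finset.sum_mul]
    refine Finset.sum_congr rfl fun i _ => ?_
    rw [Finset.sum_mul]
    refine Finset.sum_congr rfl fun j _ => ?_
    rw [Finset.mul_sum]
    refine Finset.sum_congr rfl fun k _ => ?_
    rw [Finset.mul_sum]
    refine Finset.sum_congr rfl fun l _ => ?_
    ring
  have J3 := fun i j k => integrable_finsetSum Finset.univ (fun l _ => I4 i j k l)
  have J2 := fun i j => integrable_finsetSum Finset.univ (fun k _ => J3 i j k)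
  have J1 := fun i => integrable_finsetSum Finset.univ (fun j _ => J2 i j)
  have J0 := integrable_finsetSum Finset.univ (fun i _ => J1 i)
  refine ⟨integrable_finsetSum _ (fun i _ => integrable_finsetSum _ (fun j _ => I2 i j)), ?_, ?_, ?_⟩
  · rw [e]; exact J0
  · rw [integral_finsetSum _ (fun i _ => integrable_finsetSum _ (fun j _ => I2 i j))]
    refine Finset.sum_congr rfl fun i _ => ?_
    rw [integral_finsetSum _ (fun j _ => I2 i j)]
    refine Finset.sum_congr rfl fun j _ => ?_
    rw [integral_const_mul, hK, sq]
  · have e2 : (∑ i, ∑ j, K i j ^ 2) ^ 2 = ∑ i, ∑ j, ∑ k, ∑ l, K i j * K k l * (K i j * K k l) := by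
      rw [sq, Finset.sum_mul]
      refine Finset.sum_congr rfl fun i _ => ?_
      rw [Finset.sum_mul]
      refine Finset.sum_congr rfl fun j _ => ?_
      rw [Finset.mul_sum]
      refine Finset.sum_congr rfl fun k _ => ?_
      rw [Finset.mul_sum]
      refine Finset.sum_congr rfl fun l _ => ?_
      ring
    rw [e, e2, integral_finsetSum _ (fun i _ => J1 i), ← Finset.sum_sub_distrib]
    refine Finset.sum_congr rfl fun i _ => ?_
    rw [integral_finsetSum _ (fun j _ => J2 i j), ← Finset.sum_sub_distrib]
    refine Finset.sum_congr rfl fun j _ => ?_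
    rw [integral_finsetSum _ (fun k _ => J3 i j k), ← Finset.sum_sub_distrib]
    refine Finset.sum_congr rfl fun k _ => ?_
    rw [integral_finsetSum _ (fun l _ => I4 i j k l), ← Finset.sum_sub_distrib]
    refine Finset.sum_congr rfl fun l _ => ?_
    rw [integral_const_mul, (isserlis hL (hxL i) (hxL j) (hxL k) (hxL l)).2]
    simp only [hK]
    ring

end vec

section numerics

/-- natural-number distance -/
def nd (i j : ℕ) : ℕ := (i - j) + (j - i)

/-- normalized covariance -/
def kk (r : ℝ) (i j : ℕ) : ℝ := r ^ nd i j - r ^ (i + j)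

lemma row_aux (r : ℝ) (h0 : 0 < r) (h1 : r < 1) (i n : ℕ) :
    (n ≤ i → (1 - r) * ∑ j ∈ range n, r ^ nd i j ≤ r ^ (i + 1 - n)) ∧
    (i ≤ n → (1 - r) * ∑ j ∈ range n, r ^ nd i j ≤ 2 - r ^ (n - i)) := by
  induction n with
  | zero =>
    refine ⟨fun _ => by simp; positivity, fun h => ?_⟩
    have : i = 0 := by omega
    subst this
    norm_num
  | succ n ih =>
    have A : n + 1 ≤ i → (1 - r) * ∑ j ∈ range (n + 1), r ^ nd i j ≤ r ^ (i + 1 - (n + 1)) := by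
      intro h
      have := ih.1 (by omega)
      rw [sum_range_succ, mul_add]
      have e1 : nd i n = i - n := by unfold nd; omega
      have e2 : i + 1 - n = (i - n) + 1 := by omega
      have e3 : i + 1 - (n + 1) = i - n := by omega
      rw [e1, e3]
      rw [e2, pow_succ] at this
      linarith
    refine ⟨A, fun h => ?_⟩
    rcases Nat.lt_or_ge n i with hlt | hge
    · have := A (by omega)
      have e0 : i + 1 - (n + 1) = 1 := by omega
      have e1 : n + 1 - i = 0 := by omega
      rw [e0] at this
      rw [e1]
      simp at this ⊢
      linarith
    · have := ih.2 hge
      rw [sum_range_succ, mul_add]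
      have e1 : nd i n = n - i := by unfold nd; omega
      have e2 : n + 1 - i = (n - i) + 1 := by omega
      rw [e1, e2, pow_succ]
      linarith

lemma row_le (r : ℝ) (h0 : 0 < r) (h1 : r < 1) (i n : ℕ) :
    ∑ j ∈ range n, r ^ nd i j ≤ 2 / (1 - r) := by
  have h : (1 - r) * ∑ j ∈ range n, r ^ nd i j ≤ 2 := by
    rcases le_total n i with h | h
    · have := (row_aux r h0 h1 i n).1 h
      have h2 : r ^ (i + 1 - n) ≤ 1 := pow_le_one₀ h0.le h1.le
      linarith
    · have := (row_aux r h0 h1 i n).2 h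
      have h2 : 0 ≤ r ^ (n - i) := by positivity
      linarith
  rw [le_div_iff₀ (by linarith)]
  linarith

lemma nd_comm (i j : ℕ) : nd i j = nd j i := by unfold nd; omega

lemma nd_le (i j : ℕ) : nd i j ≤ i + j := by unfold nd; omega

lemma kk_nonneg (r : ℝ) (h0 : 0 < r) (h1 : r < 1) (i j : ℕ) : 0 ≤ kk r i j := by
  unfold kk
  have := pow_le_pow_of_le_one h0.le h1.le (nd_le i j)
  linarith

lemma kk_le (r : ℝ) (h0 : 0 < r) (i j : ℕ) : kk r i j ≤ r ^ nd i j := by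
  unfold kk
  have : 0 ≤ r ^ (i + j) := by positivity
  linarith

lemma kk_le_one (r : ℝ) (h0 : 0 < r) (h1 : r < 1) (i j : ℕ) : kk r i j ≤ 1 :=
  (kk_le r h0 i j).trans (pow_le_one₀ h0.le h1.le)

lemma kk_row (r : ℝ) (h0 : 0 < r) (h1 : r < 1) (n i : ℕ) :
    ∑ j : Fin n, kk r i j ≤ 2 / (1 - r) := by
  rw [Fin.sum_univ_eq_sum_range (fun j => kk r i j) n]
  exact (Finset.sum_le_sum fun j _ => kk_le r h0 i j).trans (row_le r h0 h1 i n)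

lemma kk_four (r : ℝ) (h0 : 0 < r) (h1 : r < 1) (n : ℕ) :
    ∑ i : Fin n, ∑ j : Fin n, ∑ k : Fin n, ∑ l : Fin n,
      kk r i j * kk r k l * (kk r i k * kk r j l + kk r i l * kk r j k)
      ≤ 2 * n * (2 / (1 - r)) ^ 3 := by
  set s := 2 / (1 - r) with hs
  have hs0 : 0 ≤ s := div_nonneg (by norm_num) (by linarith)
  have P := kk_nonneg r h0 h1
  have hin : ∀ i j : Fin n, ∑ k : Fin n, ∑ l : Fin n,
      kk r i j * kk r k l * (kk r i k * kk r j l + kk r i l * kk r j k)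
      ≤ kk r i j * (2 * s ^ 2) := by
    intro i j
    have ha : ∑ k : Fin n, kk r i k ≤ s := kk_row r h0 h1 n i
    have hb : ∑ k : Fin n, kk r j k ≤ s := kk_row r h0 h1 n j
    have ha0 : 0 ≤ ∑ k : Fin n, kk r i k := Finset.sum_nonneg fun k _ => P _ _
    have hb0 : 0 ≤ ∑ k : Fin n, kk r j k := Finset.sum_nonneg fun k _ => P _ _
    calc _ ≤ ∑ k : Fin n, ∑ l : Fin n,
          kk r i j * (kk r i k * kk r j l + kk r j k * kk r i l) := by
          refine Finset.sum_le_sum fun k _ => Finset.sum_le_sum fun l _ => ?_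
          have h2 : 0 ≤ kk r i k * kk r j l + kk r i l * kk r j k :=
            add_nonneg (mul_nonneg (P _ _) (P _ _)) (mul_nonneg (P _ _) (P _ _))
          have h3 : kk r i j * kk r k l ≤ kk r i j :=
            mul_le_of_le_one_right (P _ _) (kk_le_one r h0 h1 _ _)
          have := mul_le_mul_of_nonneg_right h3 h2
          linarith
      _ = kk r i j * (2 * ((∑ k : Fin n, kk r i k) * (∑ k : Fin n, kk r j k))) := by
          simp only [← Finset.mul_sum, Finset.sum_add_distrib]
          simp only [← Finset.sum_mul]
          ring
      _ ≤ _ := by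
          apply mul_le_mul_of_nonneg_left _ (P _ _)
          have := mul_le_mul ha hb hb0 hs0
          linarith
  calc _ ≤ ∑ i : Fin n, ∑ j : Fin n, kk r i j * (2 * s ^ 2) :=
        Finset.sum_le_sum fun i _ => Finset.sum_le_sum fun j _ => hin i j
    _ ≤ ∑ i : Fin n, s * (2 * s ^ 2) := by
        refine Finset.sum_le_sum fun i _ => ?_
        rw [← Finset.sum_mul]
        exact mul_le_mul_of_nonneg_right (kk_row r h0 h1 n i) (by positivity)
    _ = _ := by simp; ring

lemma geo_rev (q : ℝ) (n : ℕ) : (1 - q) * ∑ k ∈ range n, q ^ (n - k) = q * (1 - q ^ n) := by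
  induction n with
  | zero => simp
  | succ n ih =>
    have : ∑ k ∈ range (n + 1), q ^ (n + 1 - k) = q * ∑ k ∈ range n, q ^ (n - k) + q := by
      rw [sum_range_succ, Finset.mul_sum]
      congr 1
      · refine Finset.sum_congr rfl fun k hk => ?_
        have hk := Finset.mem_range.mp hk
        rw [← pow_succ']
        congr 1
        omega
      · simp
    rw [this, mul_add, mul_left_comm, ih, pow_succ]
    ring

lemma dsum (q : ℝ) (n : ℕ) :
    (1 - q) ^ 2 * ∑ i ∈ range n, ∑ j ∈ range n, q ^ nd i j
      = n * (1 - q ^ 2) - 2 * q * (1 - q ^ n) := by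
  induction n with
  | zero => simp
  | succ n ih =>
    have e1 : ∑ i ∈ range n, q ^ nd i n = ∑ k ∈ range n, q ^ (n - k) := by
      refine Finset.sum_congr rfl fun k hk => ?_
      have hk := Finset.mem_range.mp hk
      congr 1
      unfold nd
      omega
    have e2 : ∑ j ∈ range n, q ^ nd n j = ∑ k ∈ range n, q ^ (n - k) := by
      rw [← e1]
      exact Finset.sum_congr rfl fun k _ => by rw [nd_comm]
    have e3 : nd n n = 0 := by unfold nd; omega
    have e4 : ∑ i ∈ range (n + 1), ∑ j ∈ range (n + 1), q ^ nd i j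
        = ∑ i ∈ range n, ∑ j ∈ range n, q ^ nd i j + 2 * ∑ k ∈ range n, q ^ (n - k) + 1 := by
      rw [sum_range_succ]
      simp only [sum_range_succ _ n]
      rw [Finset.sum_add_distrib, e1, e2, e3]
      ring
    have g := geo_rev q n
    rw [e4, mul_add, mul_add, ih]
    have : (1 - q) ^ 2 * (2 * ∑ k ∈ range n, q ^ (n - k))
        = 2 * (1 - q) * ((1 - q) * ∑ k ∈ range n, q ^ (n - k)) := by ring
    rw [this, g]
    push_cast
    ring

lemma geo_le (r : ℝ) (h0 : 0 < r) (h1 : r < 1) (n : ℕ) : ∑ i ∈ range n, r ^ i ≤ 1 / (1 - r) := by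
  rw [le_div_iff₀ (by linarith), geom_sum_mul_neg]
  have : 0 ≤ r ^ n := by positivity
  linarith

lemma kk_two (r : ℝ) (h0 : 0 < r) (h1 : r < 1) (n : ℕ) :
    |∑ i : Fin n, ∑ j : Fin n, kk r i j ^ 2 - n * ((1 + r ^ 2) / (1 - r ^ 2))|
      ≤ 4 / (1 - r) ^ 2 := by
  have hq1 : r ^ 2 < 1 := by nlinarith
  have conv : ∑ i : Fin n, ∑ j : Fin n, kk r i j ^ 2
      = ∑ i ∈ range n, ∑ j ∈ range n, kk r i j ^ 2 := by
    rw [← Fin.sum_univ_eq_sum_range (fun i => ∑ j ∈ range n, kk r i j ^ 2) n]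
    refine Finset.sum_congr rfl fun i _ => ?_
    rw [← Fin.sum_univ_eq_sum_range (fun j => kk r i j ^ 2) n]
  have split : ∑ i ∈ range n, ∑ j ∈ range n, kk r i j ^ 2
      = ∑ i ∈ range n, ∑ j ∈ range n, (r ^ 2) ^ nd i j
        - ∑ i ∈ range n, ∑ j ∈ range n, (2 * r ^ (nd i j) * r ^ (i + j) - (r ^ (i + j)) ^ 2) := by
    rw [← Finset.sum_sub_distrib]
    refine Finset.sum_congr rfl fun i _ => ?_
    rw [← Finset.sum_sub_distrib]
    refine Finset.sum_congr rfl fun j _ => ?_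
    unfold kk
    rw [← pow_mul, mul_comm 2, pow_mul]
    ring
  have E0 : 0 ≤ ∑ i ∈ range n, ∑ j ∈ range n,
      (2 * r ^ (nd i j) * r ^ (i + j) - (r ^ (i + j)) ^ 2) := by
    refine Finset.sum_nonneg fun i _ => Finset.sum_nonneg fun j _ => ?_
    have a := pow_le_pow_of_le_one h0.le h1.le (nd_le i j)
    have b : 0 ≤ r ^ (i + j) := by positivity
    nlinarith
  have E1 : ∑ i ∈ range n, ∑ j ∈ range n,
      (2 * r ^ (nd i j) * r ^ (i + j) - (r ^ (i + j)) ^ 2) ≤ 2 / (1 - r) ^ 2 := by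
    have g := geo_le r h0 h1 n
    have g0 : 0 ≤ ∑ i ∈ range n, r ^ i := Finset.sum_nonneg fun i _ => by positivity
    calc _ ≤ ∑ i ∈ range n, ∑ j ∈ range n, 2 * (r ^ i * r ^ j) := by
          refine Finset.sum_le_sum fun i _ => Finset.sum_le_sum fun j _ => ?_
          rw [← pow_add]
          have a : r ^ nd i j ≤ 1 := pow_le_one₀ h0.le h1.le
          have b : 0 ≤ r ^ (i + j) := by positivity
          nlinarith
      _ = 2 * ((∑ i ∈ range n, r ^ i) * (∑ i ∈ range n, r ^ i)) := by
          rw [Finset.sum_mul_sum]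
          simp only [Finset.mul_sum]
      _ ≤ 2 * ((1 / (1 - r)) * (1 / (1 - r))) := by
          have := mul_le_mul g g g0 (g0.trans g)
          linarith
      _ = _ := by
          have : (1 - r) ≠ 0 := by linarith
          field_simp
  have D := dsum (r ^ 2) n
  have hne : (1 - r ^ 2) ≠ 0 := by linarith
  have D' : ∑ i ∈ range n, ∑ j ∈ range n, (r ^ 2) ^ nd i j
      = n * ((1 + r ^ 2) / (1 - r ^ 2)) - 2 * r ^ 2 * (1 - (r ^ 2) ^ n) / (1 - r ^ 2) ^ 2 := by
    have : ∑ i ∈ range n, ∑ j ∈ range n, (r ^ 2) ^ nd i j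
      = (n * (1 - (r ^ 2) ^ 2) - 2 * r ^ 2 * (1 - (r ^ 2) ^ n)) / (1 - r ^ 2) ^ 2 := by
      rw [← D]; field_simp
    rw [this]
    field_simp
    ring
  have F0 : 0 ≤ 2 * r ^ 2 * (1 - (r ^ 2) ^ n) / (1 - r ^ 2) ^ 2 := by
    have : (r ^ 2) ^ n ≤ 1 := pow_le_one₀ (by positivity) hq1.le
    have : 0 ≤ 1 - (r ^ 2) ^ n := by linarith
    positivity
  have F1 : 2 * r ^ 2 * (1 - (r ^ 2) ^ n) / (1 - r ^ 2) ^ 2 ≤ 2 / (1 - r) ^ 2 := by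
    have a : 0 ≤ (r ^ 2) ^ n := by positivity
    have a' : 0 < 1 - r := by linarith
    apply div_le_div₀ (by norm_num)
    · have : (r ^ 2) ^ n ≤ 1 := pow_le_one₀ (by positivity) hq1.le
      nlinarith
    · positivity
    · apply pow_le_pow_left₀ a'.le
      nlinarith
  have h4 : 4 / (1 - r) ^ 2 = 2 / (1 - r) ^ 2 + 2 / (1 - r) ^ 2 := by ring
  rw [conv, split, D', h4, abs_le]
  constructor <;> linarith

lemma one_sub_exp_bounds (x : ℝ) (hx : 0 < x) :
    1 - Real.exp (-x) ≤ x ∧ x / (1 + x) ≤ 1 - Real.exp (-x) := by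
  constructor
  · linarith [Real.add_one_le_exp (-x)]
  · have h : 1 + x ≤ Real.exp x := by linarith [Real.add_one_le_exp x]
    have h2 : Real.exp (-x) ≤ 1 / (1 + x) := by
      rw [Real.exp_neg, ← one_div]
      exact one_div_le_one_div_of_le (by linarith) h
    have : x / (1 + x) = 1 - 1 / (1 + x) := by field_simp; ring
    linarith

lemma coth_bound (θ Δ : ℝ) (hθ : 0 < θ) (hΔ : 0 < Δ) :
    |Δ * ((1 + Real.exp (-θ * Δ) ^ 2) / (1 - Real.exp (-θ * Δ) ^ 2)) - 1 / θ| ≤ Δ := by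
  have hx : 0 < 2 * θ * Δ := by positivity
  have e : Real.exp (-θ * Δ) ^ 2 = Real.exp (-(2 * θ * Δ)) := by
    rw [← Real.exp_nat_mul]; congr 1; push_cast; ring
  obtain ⟨b1, b2⟩ := one_sub_exp_bounds _ hx
  rw [e]
  set y := 1 - Real.exp (-(2 * θ * Δ)) with hy
  have hypos : 0 < y := lt_of_lt_of_le (by positivity) b2
  have e1 : (1 + Real.exp (-(2 * θ * Δ))) = 2 - y := by rw [hy]; ring
  have b2' : 2 * θ * Δ ≤ y * (1 + 2 * θ * Δ) := by
    rwa [div_le_iff₀ (by positivity)] at b2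
  have e2 : Δ * ((2 - y) / y) - 1 / θ = (2 * θ * Δ - y * (1 + θ * Δ)) / (y * θ) := by
    field_simp
    ring
  rw [e1, e2, abs_le, le_div_iff₀ (by positivity), div_le_iff₀ (by positivity)]
  constructor <;> nlinarith

end numerics

section final

lemma abs_nd (Δ : ℝ) (hΔ : 0 < Δ) (i j : ℕ) : |(j : ℝ) * Δ - i * Δ| = nd i j * Δ := by
  rw [← sub_mul, abs_mul, abs_of_pos hΔ]
  congr 1
  rcases le_total i j with h | h
  · have : nd i j = j - i := by unfold nd; omega
    rw [this, Nat.cast_sub h, abs_of_nonneg]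
    have : (i : ℝ) ≤ j := by exact_mod_cast h
    linarith
  · have : nd i j = i - j := by unfold nd; omega
    rw [this, Nat.cast_sub h, abs_of_nonpos]
    · ring
    have : (j : ℝ) ≤ i := by exact_mod_cast h
    linarith

lemma ou_cov {θ : ℝ} {X : Fin 2 → ℝ → Ω → ℝ} (hX : IsOUPair θ X) (Δ : ℝ) (hΔ : 0 < Δ)
    (m : Fin 2) (i j : ℕ) :
    ∫ ω, X m (i * Δ) ω * X m (j * Δ) ω ∂ℙ = kk (Real.exp (-θ * Δ)) i j / (2 * θ) := by
  rw [hX.cov m _ _ (by positivity) (by positivity), abs_nd Δ hΔ]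
  unfold kk
  rw [← Real.exp_nat_mul, ← Real.exp_nat_mul]
  congr 3
  · ring
  · push_cast; ring

/-- the constant -/
def cst (θ : ℝ) : ℝ :=
  8 * θ ^ 3 * (√((1 + θ) ^ 3 / θ ^ 7) + (1 / (4 * θ ^ 2)) * (4 * (1 + θ) ^ 2 / θ ^ 2)
    + 1 / (4 * θ ^ 2))

lemma main_bound (θ : ℝ) (hθ : 0 < θ) [IsProbabilityMeasure (ℙ : Measure Ω)]
    (X : Fin 2 → ℝ → Ω → ℝ) (hX : IsOUPair θ X) (n : ℕ) (hn : 1 ≤ n) (Δ : ℝ) (hΔ : 0 < Δ)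
    (hΔ1 : Δ ≤ 1) (hT : 1 ≤ (n : ℝ) * Δ) (z : ℝ) :
    |((Measure.map (ouA X n Δ) ℙ) (Set.Iic z)).toReal
      - (gaussianReal 0 (Real.toNNReal (1 / (4 * θ ^ 3))) (Set.Iic z)).toReal|
      ≤ cst θ * max (1 / Real.sqrt ((n : ℝ) * Δ)) (((n : ℝ) * Δ ^ 2) ^ ((1 : ℝ) / 3)) := by
  have hn0 : (0 : ℝ) < n := by exact_mod_cast hn
  set r := Real.exp (-θ * Δ) with hr
  have hr0 : 0 < r := Real.exp_pos _
  have hr1 : r < 1 := by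
    rw [hr, Real.exp_lt_one_iff]
    nlinarith
  let K : Fin n → Fin n → ℝ := fun i j => kk r i j / (2 * θ)
  let x : Fin n → Ω → ℝ := fun i => X 0 (i * Δ)
  let y : Fin n → Ω → ℝ := fun i => X 1 (i * Δ)
  have hxm : ∀ i, Measurable (x i) := fun i => hX.meas 0 _
  have hym : ∀ i, Measurable (y i) := fun i => hX.meas 1 _
  have hgx : ∀ c : Fin n → ℝ, ∃ v : ℝ≥0,
      (ℙ : Measure Ω).map (fun s => ∑ j, c j * x j s) = gaussianReal 0 v :=
    fun c => hX.gaussian 0 n (fun j => j * Δ) c (fun j => by positivity)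
  have hgy : ∀ c : Fin n → ℝ, ∃ v : ℝ≥0,
      (ℙ : Measure Ω).map (fun s => ∑ j, c j * y j s) = gaussianReal 0 v :=
    fun c => hX.gaussian 1 n (fun j => j * Δ) c (fun j => by positivity)
  have hKx : ∀ i j, ∫ s, x i s * x j s ∂(ℙ : Measure Ω) = K i j := fun i j => ou_cov hX Δ hΔ 0 i j
  have hKy : ∀ i j, ∫ s, y i s * y j s ∂(ℙ : Measure Ω) = K i j := fun i j => ou_cov hX Δ hΔ 1 i j
  have hind : IndepFun (fun s i => x i s) (fun s i => y i s) (ℙ : Measure Ω) := by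
    have hφ : Measurable (fun (f : ℝ → ℝ) (i : Fin n) => f (i * Δ)) := by fun_prop
    exact hX.indep.comp hφ hφ
  set w : ℝ≥0 := Real.toNNReal (1 / (4 * θ ^ 3)) with hw
  have hwv : (w : ℝ) = 1 / (4 * θ ^ 3) := Real.coe_toNNReal _ (by positivity)
  have hw0 : w ≠ 0 := by
    intro h
    rw [h] at hwv
    have : 0 < 1 / (4 * θ ^ 3) := by positivity
    rw [← hwv] at this
    simp at this
  obtain ⟨q1, q2, q3, q4⟩ := quad x hxm hgx K hKx
  set a := √((n : ℝ) * Δ) / n with ha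
  have ha2 : a ^ 2 = Δ / n := by
    rw [ha, div_pow, Real.sq_sqrt (by positivity)]
    field_simp
  have hA : ouA X n Δ = fun s => a * ∑ i, x i s * y i s := by
    ext s
    unfold ouA
    rw [← Fin.sum_univ_eq_sum_range (fun k => X 0 (k * Δ) s * X 1 (k * Δ) s) n]
  have hmix := mix x y hxm hym hgy hind K hKy a w hw0 z q1
  rw [← hA] at hmix
  refine hmix.trans ?_
  set Q : Ω → ℝ := fun s => ∑ i, ∑ j, K i j * (x i s * x j s) with hQ
  have hQm : Measurable Q := by fun_prop
  have step1 : ∫ s, 2 * |a ^ 2 * (∑ i, ∑ j, K i j * (x i s * x j s)) / w - 1| ∂(ℙ : Measure Ω)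
      = 8 * θ ^ 3 * ∫ s, |Δ / n * Q s - 1 / (4 * θ ^ 3)| ∂(ℙ : Measure Ω) := by
    rw [← integral_const_mul]
    congr 1
    ext s
    rw [ha2, hwv]
    have : Δ / n * (∑ i, ∑ j, K i j * (x i s * x j s)) / (1 / (4 * θ ^ 3)) - 1
        = 4 * θ ^ 3 * (Δ / n * Q s - 1 / (4 * θ ^ 3)) := by
      simp only [hQ]
      field_simp
    rw [this, abs_mul, abs_of_pos (by positivity : 0 < 4 * θ ^ 3)]
    ring
  rw [step1]
  -- bounds on 1/(1-r)
  have hir : 1 / (1 - r) ≤ (1 + θ) / (θ * Δ) := by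
    have hx : 0 < θ * Δ := by positivity
    have h := (one_sub_exp_bounds _ hx).2
    have e : Real.exp (-(θ * Δ)) = r := by rw [hr]; congr 1; ring
    rw [e] at h
    have h2 : θ * Δ / (1 + θ) ≤ 1 - r := by
      refine le_trans ?_ h
      apply div_le_div_of_nonneg_left hx.le (by positivity)
      nlinarith
    have h3 : 0 < θ * Δ / (1 + θ) := by positivity
    refine (one_div_le_one_div_of_le h3 h2).trans (le_of_eq ?_)
    field_simp
  have hir0 : 0 < 1 / (1 - r) := by
    apply one_div_pos.mpr; linarith
  set W : ℝ := n * (1 + θ) ^ 3 / (θ ^ 7 * Δ ^ 3) with hWdef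
  have hW : ∫ s, Q s ^ 2 ∂(ℙ : Measure Ω) - (∫ s, Q s ∂(ℙ : Measure Ω)) ^ 2 ≤ W := by
    have e0 : ∫ s, Q s ∂(ℙ : Measure Ω) = ∑ i, ∑ j, K i j ^ 2 := q3
    have e1 : ∫ s, Q s ^ 2 ∂(ℙ : Measure Ω) - (∑ i, ∑ j, K i j ^ 2) ^ 2
      = ∑ i, ∑ j, ∑ k, ∑ l, K i j * K k l * (K i k * K j l + K i l * K j k) := q4
    rw [e0, e1]
    have e2 : ∑ i, ∑ j, ∑ k, ∑ l, K i j * K k l * (K i k * K j l + K i l * K j k)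
        = 1 / (16 * θ ^ 4) * ∑ i : Fin n, ∑ j : Fin n, ∑ k : Fin n, ∑ l : Fin n,
      kk r i j * kk r k l * (kk r i k * kk r j l + kk r i l * kk r j k) := by
      simp only [Finset.mul_sum]
      refine Finset.sum_congr rfl fun i _ => Finset.sum_congr rfl fun j _ =>
        Finset.sum_congr rfl fun k _ => Finset.sum_congr rfl fun l _ => ?_
      simp only [K]
      field_simp
      ring
    rw [e2]
    have h4 := kk_four r hr0 hr1 n
    have h5 : (2 / (1 - r)) ^ 3 ≤ 8 * ((1 + θ) / (θ * Δ)) ^ 3 := by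
      have : (2 / (1 - r)) ^ 3 = 8 * (1 / (1 - r)) ^ 3 := by ring
      rw [this]
      have := pow_le_pow_left₀ hir0.le hir 3
      linarith
    calc _ ≤ 1 / (16 * θ ^ 4) * (2 * n * (8 * ((1 + θ) / (θ * Δ)) ^ 3)) := by
          apply mul_le_mul_of_nonneg_left _ (by positivity)
          refine h4.trans ?_
          apply mul_le_mul_of_nonneg_left h5 (by positivity)
      _ = W := by
          rw [hWdef]
          field_simp
          norm_num
  have hc := abs_le_sqrt hQm q1 q2 (Δ / n) (1 / (4 * θ ^ 3)) W (by positivity) hW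
  have t1 : Δ / n * √W = √((1 + θ) ^ 3 / θ ^ 7) * (1 / √((n : ℝ) * Δ)) := by
    have e1 : Δ / n = √((Δ / n) ^ 2) := (Real.sqrt_sq (by positivity)).symm
    have e2 : 1 / √((n : ℝ) * Δ) = √(1 / ((n : ℝ) * Δ)) := by
      rw [Real.sqrt_div zero_le_one, Real.sqrt_one]
    rw [e1, e2, ← Real.sqrt_mul (by positivity), ← Real.sqrt_mul (by positivity)]
    congr 1
    rw [hWdef]
    field_simp
  have t2 : |Δ / n * (∫ s, Q s ∂(ℙ : Measure Ω)) - 1 / (4 * θ ^ 3)|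
      ≤ (1 / (4 * θ ^ 2)) * (4 * (1 + θ) ^ 2 / θ ^ 2) * (1 / (n * Δ)) + 1 / (4 * θ ^ 2) * Δ := by
    have e0 : ∫ s, Q s ∂(ℙ : Measure Ω)
        = 1 / (4 * θ ^ 2) * ∑ i : Fin n, ∑ j : Fin n, kk r i j ^ 2 := by
      refine q3.trans ?_
      simp only [Finset.mul_sum]
      refine Finset.sum_congr rfl fun i _ => Finset.sum_congr rfl fun j _ => ?_
      simp only [K]
      field_simp
      norm_num
    have k2 := kk_two r hr0 hr1 n
    have cb := coth_bound θ Δ hθ hΔ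
    rw [← hr] at cb
    set D := ∑ i : Fin n, ∑ j : Fin n, kk r i j ^ 2 with hD
    set c := (1 + r ^ 2) / (1 - r ^ 2) with hcdef
    have e1 : Δ / n * (∫ s, Q s ∂(ℙ : Measure Ω)) - 1 / (4 * θ ^ 3)
        = 1 / (4 * θ ^ 2) * (Δ / n * (D - n * c) + (Δ * c - 1 / θ)) := by
      rw [e0]
      field_simp
      ring
    have b1 : Δ / n * |D - n * c| ≤ (4 * (1 + θ) ^ 2 / θ ^ 2) * (1 / (n * Δ)) := by
      have h5 : 4 / (1 - r) ^ 2 ≤ 4 * ((1 + θ) / (θ * Δ)) ^ 2 := by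
        have : 4 / (1 - r) ^ 2 = 4 * (1 / (1 - r)) ^ 2 := by
          rw [div_pow, one_pow, mul_one_div]
        rw [this]
        have := pow_le_pow_left₀ hir0.le hir 2
        linarith
      calc _ ≤ Δ / n * (4 * ((1 + θ) / (θ * Δ)) ^ 2) :=
            mul_le_mul_of_nonneg_left (k2.trans h5) (by positivity)
        _ = _ := by field_simp
    rw [e1, abs_mul, abs_of_pos (by positivity : 0 < 1 / (4 * θ ^ 2)), mul_assoc, ← mul_add]
    apply mul_le_mul_of_nonneg_left _ (by positivity)
    refine (abs_add_le _ _).trans (add_le_add ?_ cb)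
    rw [abs_mul, abs_of_pos (by positivity : 0 < Δ / n)]
    exact b1
  set M := max (1 / √((n : ℝ) * Δ)) (((n : ℝ) * Δ ^ 2) ^ ((1 : ℝ) / 3)) with hM
  have m1 : 1 / √((n : ℝ) * Δ) ≤ M := le_max_left _ _
  have m2 : 1 / ((n : ℝ) * Δ) ≤ M := by
    refine le_trans ?_ m1
    apply one_div_le_one_div_of_le (Real.sqrt_pos.mpr (by positivity))
    rw [Real.sqrt_le_left (by positivity)]
    nlinarith
  have m3 : Δ ≤ M := by
    refine le_trans ?_ (le_max_right _ _)
    have h1 : Δ ≤ (n : ℝ) * Δ ^ 2 := by nlinarith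
    rcases le_total ((n : ℝ) * Δ ^ 2) 1 with h | h
    · exact h1.trans (Real.self_le_rpow_of_le_one (by positivity) h (by norm_num))
    · exact hΔ1.trans (Real.one_le_rpow h (by norm_num))
  rw [t1] at hc
  unfold cst
  rw [mul_assoc (8 * θ ^ 3) _ M]
  apply mul_le_mul_of_nonneg_left _ (by positivity)
  refine hc.trans ?_
  have n1 := mul_le_mul_of_nonneg_left m1 (Real.sqrt_nonneg ((1 + θ) ^ 3 / θ ^ 7))
  have n2 := mul_le_mul_of_nonneg_left m2
    (by positivity : 0 ≤ (1 / (4 * θ ^ 2)) * (4 * (1 + θ) ^ 2 / θ ^ 2))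
  have n3 := mul_le_mul_of_nonneg_left m3 (by positivity : 0 ≤ 1 / (4 * θ ^ 2))
  rw [add_mul, add_mul]
  linarith

end final

/-- there is `C(θ) > 0` such that for all `n ≥ 1` and meshes
`0 < Δₙ ≤ 1` with `nΔₙ ≥ 1`,
`d_Kol(A(n), N(0,1/(4θ³))) ≤ C(θ)·max((nΔₙ)^{−1/2}, (nΔₙ²)^{1/3})`;
in particular if `Δₙ → 0`, `nΔₙ → ∞` and `nΔₙ² → 0` then `A(n) ⇒ N(0,1/(4θ³))`. -/
theorem stmt_12 (θ : ℝ) (hθ : 0 < θ) [IsProbabilityMeasure (ℙ : Measure Ω)]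
    (X : Fin 2 → ℝ → Ω → ℝ) (hX : IsOUPair θ X) :
    (∃ C : ℝ, 0 < C ∧ ∀ n : ℕ, 1 ≤ n → ∀ Δ : ℝ, 0 < Δ → Δ ≤ 1 → 1 ≤ (n : ℝ) * Δ →
      dKol (Measure.map (ouA X n Δ) ℙ) (gaussianReal 0 (Real.toNNReal (1 / (4 * θ ^ 3))))
        ≤ C * max (1 / Real.sqrt ((n : ℝ) * Δ)) (((n : ℝ) * Δ ^ 2) ^ ((1 : ℝ) / 3))) ∧
    (∀ Δ : ℕ → ℝ, (∀ n, 0 < Δ n) → Tendsto Δ atTop (𝓝 0) →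
      Tendsto (fun n : ℕ => (n : ℝ) * Δ n) atTop atTop →
      Tendsto (fun n : ℕ => (n : ℝ) * (Δ n) ^ 2) atTop (𝓝 0) →
      Tendsto (fun n : ℕ => dKol (Measure.map (ouA X n (Δ n)) ℙ)
          (gaussianReal 0 (Real.toNNReal (1 / (4 * θ ^ 3))))) atTop (𝓝 0)) := by
  have h1 : ∀ n : ℕ, 1 ≤ n → ∀ Δ : ℝ, 0 < Δ → Δ ≤ 1 → 1 ≤ (n : ℝ) * Δ →
      dKol (Measure.map (ouA X n Δ) ℙ) (gaussianReal 0 (Real.toNNReal (1 / (4 * θ ^ 3))))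
        ≤ cst θ * max (1 / Real.sqrt ((n : ℝ) * Δ)) (((n : ℝ) * Δ ^ 2) ^ ((1 : ℝ) / 3)) := by
    intro n hn Δ hΔ hΔ1 hT
    exact ciSup_le fun z => main_bound θ hθ X hX n hn Δ hΔ hΔ1 hT z
  refine ⟨⟨cst θ, ?_, h1⟩, ?_⟩
  · unfold cst
    positivity
  intro Δ hΔ hΔ0 hT hT2
  have hlim : Tendsto (fun n : ℕ => cst θ * max (1 / Real.sqrt ((n : ℝ) * Δ n))
      (((n : ℝ) * (Δ n) ^ 2) ^ ((1 : ℝ) / 3))) atTop (𝓝 0) := by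
    have a1 : Tendsto (fun n : ℕ => 1 / Real.sqrt ((n : ℝ) * Δ n)) atTop (𝓝 0) := by
      simp only [one_div]
      exact tendsto_inv_atTop_zero.comp (Real.tendsto_sqrt_atTop.comp hT)
    have a2 : Tendsto (fun n : ℕ => ((n : ℝ) * (Δ n) ^ 2) ^ ((1 : ℝ) / 3)) atTop (𝓝 0) := by
      have := hT2.rpow_const (p := (1 : ℝ) / 3) (Or.inr (by norm_num))
      rwa [Real.zero_rpow (by norm_num)] at this
    have := (a1.max a2).const_mul (cst θ)
    simpa using this
  refine squeeze_zero' (Eventually.of_forall fun n => ?_) ?_ hlim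
  · exact Real.iSup_nonneg fun z => abs_nonneg _
  · filter_upwards [hΔ0.eventually_le_const zero_lt_one, hT.eventually_ge_atTop 1,
      eventually_ge_atTop 1] with n b1 b2 b3
    exact h1 n b3 (Δ n) (hΔ n) b1 b2

end
end
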